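/- arXiv:1109.0898 — 5 statements merged into one kernel-verified Lean document; each statement's English description precedes it below -/
import Mathlib

section
/- (Exponential family, upper bounds.) Assume N, M, n, m → ∞, p = n/N → 0, q = m/M → 0, and log(1/p)/m + log(1/q)/n → 0. If A'(s⁰+a)√(n m p q) → ∞ or liminf A'(s⁰+a)√(nm)/√(2(n log(1/p) + m log(1/q))) > 1, then the test ψ* = max{ψ^lin_H, ψ^max_T} — with H → ∞ such that H < c·A'(s⁰+a)√(n m p q) for some fixed c ∈ (0,1), and T_{nm} = √((2+δ) log G_{nm}) for some sufficiently small δ > 0 — satisfies γ_{nm,a}(ψ*) → 0. -/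
/-!
All error probabilities are bounded by exponential moments. For independent `Y_{ij} ∼ f_{s_{ij}}`
one has `E exp(∑ w_{ij} Y_{ij}) = exp(∑ (A(s_{ij} + w_{ij}) - A(s_{ij})))` (`laplace`), so everything
reduces to estimates on `A`, which is a translated cumulant generating function and therefore
differentiable and convex on `I` (`convex_diff`), with `A(s⁰+u) - A(s⁰) ≤ (1+ε)u²/2` for small
`u ≥ 0` and `A'(s⁰+u) = u + o(u)` (`local_bounds`).

First-type error (`alpha_tendsto`). The linear statistic contributes at most `exp(1 - H)`. For the
scan statistic, a union bound over the `G_{nm}` submatrices with tilt `T/√(nm)` gives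
`exp(log G - (1-ε)T²/2)`; the tilt tends to zero since `log G ≤ n(log(N/n)+1) + m(log(M/m)+1) = o(nm)`,
and `log G → ∞`.

Second-type error (`beta_tendsto`). Since `A` is convex, `A(s-θ) - A(s) ≤ -θ A'(b-θ)` for all
`s ≥ b` (`tilt_down`), which makes the bounds uniform over the alternative and needs no control of
the variances `A''(s_{ij})`. The inequality `H < c A'(s⁰+a)√(nmpq)` with `H → ∞` always forces
`A'(s⁰+a)√(nmpq) → ∞`. If `a` is at most a fixed small constant, the linear statistic with tilt
`1/√(NM)` detects the alternative: `√(nmpq) = nm/√(NM)`, and the exponent is at most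
`2 - (1-c)H/2`. If `a` is larger than this constant, the scan statistic detects it with a fixed
tilt, because `T = o(√(nm))` while the mean of `Y_C` is of order at least `√(nm)`.
-/

open MeasureTheory ProbabilityTheory Filter Topology
open scoped Classical

noncomputable section

/-- Standard normal cumulative distribution function `Φ`. -/
def Phi (x : ℝ) : ℝ := ((gaussianReal 0 1) (Set.Iic x)).toReal

/-- Law `P_S` of the `N × M` observation matrix `Y_{ij} = s_{ij} + ξ_{ij}`
with i.i.d. standard Gaussian noise. -/
def matLaw (N M : ℕ) (S : Fin N → Fin M → ℝ) : Measure ((Fin N × Fin M) → ℝ) :=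
  Measure.pi fun ij => gaussianReal (S ij.1 ij.2) 1

/-- First-type error `α(ψ) = E_0 ψ`. -/
def alphaErr (N M : ℕ) (ψ : ((Fin N × Fin M) → ℝ) → ℝ) : ℝ :=
  ∫ y, ψ y ∂(matLaw N M fun _ _ => 0)

/-- Second-type error `β(ψ, S) = E_S (1 - ψ)`. -/
def betaErr (N M : ℕ) (S : Fin N → Fin M → ℝ) (ψ : ((Fin N × Fin M) → ℝ) → ℝ) : ℝ :=
  ∫ y, (1 - ψ y) ∂(matLaw N M S)

/-- The alternative class `S_{nm,a}`: some `n × m` submatrix `C = A × B` has all entries `≥ a`,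
and all other entries vanish. -/
def SAlt (N M n m : ℕ) (a : ℝ) : Set (Fin N → Fin M → ℝ) :=
  {S | ∃ (A : Finset (Fin N)) (B : Finset (Fin M)), A.card = n ∧ B.card = m ∧
      (∀ i j, i ∈ A → j ∈ B → a ≤ S i j) ∧ ∀ i j, ¬(i ∈ A ∧ j ∈ B) → S i j = 0}

/-- Maximal second-type error `β_{nm,a}(ψ)`. -/
def betaMax (N M n m : ℕ) (a : ℝ) (ψ : ((Fin N × Fin M) → ℝ) → ℝ) : ℝ :=
  sSup ((fun S => betaErr N M S ψ) '' SAlt N M n m a)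

/-- Linear statistic `t_lin`. -/
def tlin (N M : ℕ) (y : (Fin N × Fin M) → ℝ) : ℝ :=
  (∑ ij : Fin N × Fin M, y ij) / Real.sqrt ((N : ℝ) * M)

/-- Linear test `ψ^lin_H = 1{t_lin > H}`. -/
def psiLin (N M : ℕ) (H : ℝ) (y : (Fin N × Fin M) → ℝ) : ℝ :=
  if H < tlin N M y then 1 else 0

/-- Normalized submatrix sum `Y_C` for `C = A × B`. -/
def YC (N M : ℕ) (y : (Fin N × Fin M) → ℝ)
    (A : Finset (Fin N)) (B : Finset (Fin M)) : ℝ :=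
  (∑ i ∈ A, ∑ j ∈ B, y (i, j)) / Real.sqrt ((A.card : ℝ) * B.card)

/-- Scan statistic `t_max = max_{C ∈ C_{nm}} Y_C`. -/
def tmax (N M n m : ℕ) (y : (Fin N × Fin M) → ℝ) : ℝ :=
  sSup {v | ∃ (A : Finset (Fin N)) (B : Finset (Fin M)),
    A.card = n ∧ B.card = m ∧ v = YC N M y A B}

/-- `G_{nm} = C(N,n) · C(M,m)`, the number of `n × m` submatrices. -/
def Gnm (N M n m : ℕ) : ℕ := N.choose n * M.choose m

/-- Threshold `T_{nm} = √(2 log G_{nm})`. -/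
def Tnm (N M n m : ℕ) : ℝ := Real.sqrt (2 * Real.log (Gnm N M n m : ℝ))

/-- Scan test `ψ^max_T = 1{t_max > T}`. -/
def psiMax (N M n m : ℕ) (T : ℝ) (y : (Fin N × Fin M) → ℝ) : ℝ :=
  if T < tmax N M n m y then 1 else 0

/-- Exponential family law `f_s(y) μ(dy) = exp(s y − A(s)) h(y) μ(dy)`. -/
def expLaw (μ : Measure ℝ) (h : ℝ → ℝ) (A : ℝ → ℝ) (s : ℝ) : Measure ℝ :=
  μ.withDensity fun y => ENNReal.ofReal (Real.exp (s * y - A s) * h y)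

/-- Law of the matrix of independent observations `Y_{ij} ∼ f_{s_{ij}}`. -/
def expMatLaw (μ : Measure ℝ) (h : ℝ → ℝ) (A : ℝ → ℝ) (N M : ℕ)
    (S : Fin N → Fin M → ℝ) : Measure ((Fin N × Fin M) → ℝ) :=
  Measure.pi fun ij => expLaw μ h A (S ij.1 ij.2)

/-- Alternative class for the exponential family model: entries in `I`, equal to
`s⁰` off some `n × m` submatrix and `≥ s⁰ + a` on it. -/
def SAltExp (N M n m : ℕ) (I : Set ℝ) (s0 a : ℝ) : Set (Fin N → Fin M → ℝ) :=
  {S | (∀ i j, S i j ∈ I) ∧ ∃ (A : Finset (Fin N)) (B : Finset (Fin M)),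
    A.card = n ∧ B.card = m ∧ (∀ i j, i ∈ A → j ∈ B → s0 + a ≤ S i j) ∧
    ∀ i j, ¬(i ∈ A ∧ j ∈ B) → S i j = s0}

/-- First-type error in the exponential family model. -/
def alphaExp (μ : Measure ℝ) (h : ℝ → ℝ) (A : ℝ → ℝ) (N M : ℕ) (s0 : ℝ)
    (ψ : ((Fin N × Fin M) → ℝ) → ℝ) : ℝ :=
  ∫ y, ψ y ∂(expMatLaw μ h A N M fun _ _ => s0)

/-- Second-type error in the exponential family model. -/
def betaExp (μ : Measure ℝ) (h : ℝ → ℝ) (A : ℝ → ℝ) (N M : ℕ)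
    (S : Fin N → Fin M → ℝ) (ψ : ((Fin N × Fin M) → ℝ) → ℝ) : ℝ :=
  ∫ y, (1 - ψ y) ∂(expMatLaw μ h A N M S)

/-- Maximal second-type error in the exponential family model. -/
def betaMaxExp (μ : Measure ℝ) (h : ℝ → ℝ) (A : ℝ → ℝ) (N M n m : ℕ)
    (I : Set ℝ) (s0 a : ℝ) (ψ : ((Fin N × Fin M) → ℝ) → ℝ) : ℝ :=
  sSup ((fun S => betaExp μ h A N M S ψ) '' SAltExp N M n m I s0 a)

/-! ### The exponential family: moment generating function and properties of `A` -/

section Family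

variable {μ : Measure ℝ} {h A : ℝ → ℝ} {I : Set ℝ}

/-- Moment generating function of a member of the family: tilting `f_s` by `e^{w y}` gives a
multiple of `f_{s+w}`, so that `E_s e^{wY} = e^{A(s+w) - A(s)}`. -/
lemma lintegral_exp_expLaw (hh : Measurable h) {s w : ℝ}
    (hp : IsProbabilityMeasure (expLaw μ h A (s + w))) :
    ∫⁻ y, ENNReal.ofReal (Real.exp (w * y)) ∂(expLaw μ h A s)
      = ENNReal.ofReal (Real.exp (A (s + w) - A s)) := by
  have h1 : ∫⁻ y, ENNReal.ofReal (Real.exp ((s + w) * y - A (s + w)) * h y) ∂μ = 1 := by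
    have := hp.measure_univ
    rwa [expLaw, withDensity_apply _ MeasurableSet.univ, Measure.restrict_univ] at this
  rw [expLaw, lintegral_withDensity_eq_lintegral_mul _ (by fun_prop) (by fun_prop)]
  calc _ = ∫⁻ y, ENNReal.ofReal (Real.exp (A (s + w) - A s)) *
        ENNReal.ofReal (Real.exp ((s + w) * y - A (s + w)) * h y) ∂μ := by
        refine lintegral_congr fun y => ?_
        rw [Pi.mul_apply, ← ENNReal.ofReal_mul' (Real.exp_pos _).le,
          ← ENNReal.ofReal_mul (Real.exp_pos _).le]
        congr 1
        rw [mul_right_comm, ← Real.exp_add, ← mul_assoc, ← Real.exp_add]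
        ring_nf
    _ = _ := by
        rw [lintegral_const_mul _ (by fun_prop), h1, mul_one]

lemma integrable_exp_expLaw (hh : Measurable h) {s w : ℝ}
    (hp : IsProbabilityMeasure (expLaw μ h A (s + w))) :
    Integrable (fun y => Real.exp (w * y)) (expLaw μ h A s) := by
  refine ⟨by fun_prop, ?_⟩
  rw [hasFiniteIntegral_iff_ofReal (ae_of_all _ fun y => (Real.exp_pos _).le),
    lintegral_exp_expLaw hh hp]
  exact ENNReal.ofReal_lt_top

lemma integral_exp_expLaw (hh : Measurable h) {s w : ℝ}
    (hp : IsProbabilityMeasure (expLaw μ h A (s + w))) :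
    ∫ y, Real.exp (w * y) ∂(expLaw μ h A s) = Real.exp (A (s + w) - A s) := by
  rw [integral_eq_lintegral_of_nonneg_ae (ae_of_all _ fun y => (Real.exp_pos _).le) (by fun_prop),
    lintegral_exp_expLaw hh hp, ENNReal.toReal_ofReal (Real.exp_pos _).le]

/-- Up to translation, `A` is the cumulant generating function of `f_{s⁰}`; hence it is
differentiable and convex on `I`. -/
lemma convex_diff (hh : Measurable h) (hI : IsOpen I) (hI' : I.OrdConnected)
    {s0 : ℝ} (hs0 : s0 ∈ I) (hprob : ∀ s ∈ I, IsProbabilityMeasure (expLaw μ h A s)) :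
    ConvexOn ℝ I A ∧ ∀ s ∈ I, DifferentiableAt ℝ A s := by
  set ν := expLaw μ h A s0 with hν
  have hpν : IsProbabilityMeasure ν := hprob s0 hs0
  have hcgf : ∀ s ∈ I, cgf id ν (s - s0) + A s0 = A s := by
    intro s hs
    have hp : IsProbabilityMeasure (expLaw μ h A (s0 + (s - s0))) := by
      rw [add_sub_cancel]; exact hprob s hs
    have := integral_exp_expLaw hh hp
    simp only [cgf, mgf, id]
    rw [this, Real.log_exp, add_sub_cancel]; ring
  have hsub : ∀ s ∈ I, s - s0 ∈ interior (integrableExpSet id ν) := by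
    intro s hs
    have hop : IsOpen ((fun w => s0 + w) ⁻¹' I) := hI.preimage (by fun_prop)
    refine mem_interior.2 ⟨_, ?_, hop, by simpa using hs⟩
    intro w hw
    exact integrable_exp_expLaw hh (hprob _ hw)
  have hdiff : ∀ s ∈ I, DifferentiableAt ℝ A s := by
    intro s hs
    have h1 : DifferentiableAt ℝ (fun s => cgf id ν (s - s0) + A s0) s := by
      have := (analyticAt_cgf (hsub s hs)).differentiableAt
      exact (DifferentiableAt.comp (f := fun s : ℝ => s - s0) s this (by fun_prop)).add_const _
    refine h1.congr_of_eventuallyEq ?_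
    filter_upwards [hI.mem_nhds hs] with x hx using (hcgf x hx).symm
  refine ⟨?_, hdiff⟩
  have hC : ConvexOn ℝ (interior (integrableExpSet id ν)) (cgf id ν) := by
    refine convexOn_of_deriv2_nonneg' (convex_integrableExpSet.interior) ?_ ?_ ?_
    · exact analyticOn_cgf.differentiableOn
    · exact analyticOnNhd_cgf.deriv.differentiableOn
    · intro v hv
      have h2 := iteratedDeriv_two_cgf_eq_integral hv
      rw [iteratedDeriv_eq_iterate] at h2
      rw [h2]
      exact div_nonneg (integral_nonneg fun y => by positivity) mgf_nonneg
  have hconv : Convex ℝ I := hI'.convex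
  refine ⟨hconv, ?_⟩
  intro x hx y hy α β hα hβ hαβ
  rw [← hcgf x hx, ← hcgf y hy, ← hcgf _ (hconv hx hy hα hβ hαβ)]
  have := hC.2 (hsub x hx) (hsub y hy) hα hβ hαβ
  simp only [smul_eq_mul] at this ⊢
  have e : α * x + β * y - s0 = α * (x - s0) + β * (y - s0) := by
    linear_combination s0 * hαβ
  rw [e]
  have e2 : α * A s0 + β * A s0 = A s0 := by rw [← add_mul, hαβ, one_mul]
  nlinarith

/-- First-order bound for a downward tilt, uniform in `s ≥ b`: by convexity of `A` an unknown
parameter may be replaced by the smallest value it is allowed to take. -/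
lemma tilt_down (hconv : ConvexOn ℝ I A) (hd : ∀ s ∈ I, DifferentiableAt ℝ A s)
    (hI' : I.OrdConnected) {s b θ : ℝ} (hs : s ∈ I) (hbθ : b - θ ∈ I) (hbs : b ≤ s)
    (hθ : 0 < θ) : s - θ ∈ I ∧ A (s - θ) - A s ≤ -θ * deriv A (b - θ) := by
  have hsθ : s - θ ∈ I := hI'.out hbθ hs ⟨by linarith, by linarith⟩
  refine ⟨hsθ, ?_⟩
  have h1 := hconv.deriv_le_slope hsθ hs (by linarith) (hd _ hsθ)
  have h2 := hconv.monotoneOn_deriv hd hbθ hsθ (by linarith)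
  rw [slope_def_field, le_div_iff₀ (by linarith)] at h1
  nlinarith

/-- Second-order behaviour of `A` at `s⁰`. -/
lemma local_bounds (hd : ∀ s ∈ I, DifferentiableAt ℝ A s) (hI : IsOpen I) {s0 : ℝ}
    (hs0 : s0 ∈ I) (hd1 : HasDerivAt A 0 s0) (hd2 : HasDerivAt (deriv A) 1 s0)
    {ε : ℝ} (hε : 0 < ε) :
    ∃ r > 0, (∀ u, |u| ≤ r → s0 + u ∈ I ∧ |deriv A (s0 + u) - u| ≤ ε * |u|) ∧
      ∀ u, 0 ≤ u → u ≤ r → A (s0 + u) - A s0 ≤ (1 + ε) / 2 * u ^ 2 := by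
  have h1 : ∀ᶠ u in 𝓝 (0 : ℝ), s0 + u ∈ I ∧ |deriv A (s0 + u) - u| ≤ ε * |u| := by
    have ha : ∀ᶠ u in 𝓝 (0 : ℝ), s0 + u ∈ I := by
      have : Tendsto (fun u : ℝ => s0 + u) (𝓝 0) (𝓝 s0) := by
        have : Continuous (fun u : ℝ => s0 + u) := by fun_prop
        simpa using this.tendsto 0
      exact this (hI.mem_nhds hs0)
    have hb := (hasDerivAt_iff_isLittleO_nhds_zero.1 hd2).bound hε
    filter_upwards [ha, hb] with u hu1 hu2
    refine ⟨hu1, ?_⟩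
    simpa [hd1.deriv] using hu2
  obtain ⟨r, hr, hball⟩ := Metric.eventually_nhds_iff_ball.1 h1
  have hloc : ∀ u, |u| ≤ r / 2 → s0 + u ∈ I ∧ |deriv A (s0 + u) - u| ≤ ε * |u| := by
    intro u hu
    exact hball u (by simpa using lt_of_le_of_lt hu (by linarith))
  refine ⟨r / 2, by linarith, hloc, ?_⟩
  have hder : ∀ u ∈ Set.Icc 0 (r / 2), HasDerivAt
      (fun u => (1 + ε) / 2 * u ^ 2 - A (s0 + u)) ((1 + ε) * u - deriv A (s0 + u)) u := by
    intro u hu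
    have h2 := (hd _ (hloc u (by rw [abs_of_nonneg hu.1]; exact hu.2)).1).hasDerivAt
    have h3 : HasDerivAt (fun u => A (s0 + u)) (deriv A (s0 + u)) u :=
      h2.comp_const_add s0 u
    have h4 : HasDerivAt (fun u : ℝ => (1 + ε) / 2 * u ^ 2) ((1 + ε) * u) u := by
      have := (hasDerivAt_pow 2 u).const_mul ((1 + ε) / 2)
      convert! this using 1
      simp; ring
    exact h4.sub h3
  have hmono : MonotoneOn (fun u => (1 + ε) / 2 * u ^ 2 - A (s0 + u)) (Set.Icc 0 (r / 2)) := by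
    refine monotoneOn_of_deriv_nonneg (convex_Icc _ _) ?_ ?_ ?_
    · exact fun u hu => (hder u hu).continuousAt.continuousWithinAt
    · exact fun u hu => (hder u (interior_subset hu)).differentiableAt.differentiableWithinAt
    · intro u hu
      have hu := interior_subset hu
      rw [(hder u hu).deriv]
      have := (hloc u (by rw [abs_of_nonneg hu.1]; exact hu.2)).2
      rw [abs_of_nonneg hu.1] at this
      linarith [(abs_le.1 this).2]
  intro u hu0 hur
  have := hmono ⟨le_rfl, by linarith⟩ ⟨hu0, hur⟩ hu0
  simp at this
  linarith

/-- Laplace transform of a linear functional of independent observations. -/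
lemma laplace (hh : Measurable h) (hprob : ∀ s ∈ I, IsProbabilityMeasure (expLaw μ h A s))
    {ι : Type*} [Fintype ι] (S w : ι → ℝ) (hS : ∀ i, S i ∈ I) (hSw : ∀ i, S i + w i ∈ I) (x : ℝ) :
    Integrable (fun y : ι → ℝ => Real.exp (∑ i, w i * y i - x))
      (Measure.pi fun i => expLaw μ h A (S i)) ∧
    ∫ y : ι → ℝ, Real.exp (∑ i, w i * y i - x) ∂(Measure.pi fun i => expLaw μ h A (S i))
      = Real.exp (∑ i, (A (S i + w i) - A (S i)) - x) := by
  have : ∀ i, IsProbabilityMeasure (expLaw μ h A (S i)) := fun i => hprob _ (hS i)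
  have he : (fun y : ι → ℝ => Real.exp (∑ i, w i * y i - x))
      = fun y => (∏ i, Real.exp (w i * y i)) * Real.exp (-x) := by
    funext y
    rw [← Real.exp_sum, ← Real.exp_add, sub_eq_add_neg]
  rw [he]
  constructor
  · refine Integrable.mul_const ?_ _
    exact Integrable.fintype_prod_dep (f := fun i y => Real.exp (w i * y))
      (fun i => integrable_exp_expLaw hh (hprob _ (hSw i)))
  · rw [integral_mul_const, integral_fintype_prod_eq_prod (f := fun i y => Real.exp (w i * y))]
    rw [sub_eq_add_neg, Real.exp_add, Real.exp_sum]
    congr 1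
    exact Finset.prod_congr rfl fun i _ => integral_exp_expLaw hh (hprob _ (hSw i))

end Family

/-! ### Chernoff bounds for the errors of the combined test -/

section Errors

variable {μ : Measure ℝ} {h A : ℝ → ℝ} {I : Set ℝ}

/-- The combined test `ψ* = max{ψ^lin_H, ψ^max_T}`. -/
def psiStar (N M n m : ℕ) (H T : ℝ) (y : (Fin N × Fin M) → ℝ) : ℝ :=
  max (psiLin N M H y) (psiMax N M n m T y)

lemma psiStar_nonneg (N M n m : ℕ) (H T : ℝ) (y : (Fin N × Fin M) → ℝ) :
    0 ≤ psiStar N M n m H T y := by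
  refine le_max_of_le_left ?_
  unfold psiLin; split_ifs <;> norm_num

lemma psiStar_le_one (N M n m : ℕ) (H T : ℝ) (y : (Fin N × Fin M) → ℝ) :
    psiStar N M n m H T y ≤ 1 := by
  refine max_le ?_ ?_
  · unfold psiLin; split_ifs <;> norm_num
  · unfold psiMax; split_ifs <;> norm_num

lemma psiStar_lin {N M n m : ℕ} {H T : ℝ} {y : (Fin N × Fin M) → ℝ} (hy : H < tlin N M y) :
    psiStar N M n m H T y = 1 := by
  refine le_antisymm (psiStar_le_one _ _ _ _ _ _ _) (le_max_of_le_left ?_)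
  simp [psiLin, hy]

lemma psiStar_max {N M n m : ℕ} {H T : ℝ} {y : (Fin N × Fin M) → ℝ} (hy : T < tmax N M n m y) :
    psiStar N M n m H T y = 1 := by
  refine le_antisymm (psiStar_le_one _ _ _ _ _ _ _) (le_max_of_le_right ?_)
  simp [psiMax, hy]

lemma psiStar_zero {N M n m : ℕ} {H T : ℝ} {y : (Fin N × Fin M) → ℝ}
    (h1 : ¬ H < tlin N M y) (h2 : ¬ T < tmax N M n m y) :
    psiStar N M n m H T y = 0 := by
  simp [psiStar, psiMax, psiLin, h1, h2]

lemma YC_le_tmax {N M n m : ℕ} (y : (Fin N × Fin M) → ℝ) {P : Finset (Fin N)}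
    {Q : Finset (Fin M)} (hP : P.card = n) (hQ : Q.card = m) :
    YC N M y P Q ≤ tmax N M n m y := by
  refine le_csSup (Set.Finite.bddAbove ?_) ⟨P, Q, hP, hQ, rfl⟩
  refine (Set.finite_range fun PQ : Finset (Fin N) × Finset (Fin M) =>
    YC N M y PQ.1 PQ.2).subset ?_
  rintro v ⟨P, Q, -, -, rfl⟩
  exact ⟨(P, Q), rfl⟩

/-- Weight vector `θ · 1_{P × Q}` of a submatrix sum. -/
def boxW {N M : ℕ} (P : Finset (Fin N)) (Q : Finset (Fin M)) (θ : ℝ) (ij : Fin N × Fin M) : ℝ :=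
  if ij.1 ∈ P ∧ ij.2 ∈ Q then θ else 0

lemma sum_box {N M : ℕ} (P : Finset (Fin N)) (Q : Finset (Fin M)) (f : Fin N × Fin M → ℝ) :
    ∑ ij : Fin N × Fin M, (if ij.1 ∈ P ∧ ij.2 ∈ Q then f ij else 0)
      = ∑ i ∈ P, ∑ j ∈ Q, f (i, j) := by
  rw [← Finset.sum_product', ← Finset.sum_filter]
  refine Finset.sum_congr ?_ fun _ _ => rfl
  ext ij
  simp

lemma sum_boxW {N M : ℕ} (P : Finset (Fin N)) (Q : Finset (Fin M)) (θ : ℝ)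
    (y : (Fin N × Fin M) → ℝ) :
    ∑ ij, boxW P Q θ ij * y ij = θ * ∑ i ∈ P, ∑ j ∈ Q, y (i, j) := by
  have := sum_box P Q (fun ij => θ * y ij)
  simp only [← Finset.mul_sum] at this
  rw [← this]
  refine Finset.sum_congr rfl fun ij _ => ?_
  unfold boxW; split_ifs <;> simp

/-- Chernoff bound with parameter `1` for the linear statistic, and with parameter `T` and a union
bound over the `G_{nm}` submatrices for the scan statistic. -/
lemma alpha_bound (hh : Measurable h) (hprob : ∀ s ∈ I, IsProbabilityMeasure (expLaw μ h A s))
    {s0 : ℝ} (hs0 : s0 ∈ I) {N M n m : ℕ} {H T : ℝ} (hnN : n ≤ N) (hmM : m ≤ M)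
    (hT : 0 ≤ T) (h1 : s0 + 1 / √((N : ℝ) * M) ∈ I) (h2 : s0 + T / √((n : ℝ) * m) ∈ I) :
    alphaExp μ h A N M s0 (psiStar N M n m H T)
      ≤ Real.exp ((N : ℝ) * M * (A (s0 + 1 / √((N : ℝ) * M)) - A s0) - H)
        + Gnm N M n m *
          Real.exp ((n : ℝ) * m * (A (s0 + T / √((n : ℝ) * m)) - A s0) - T ^ 2) := by
  set 𝒞 := Finset.powersetCard n (Finset.univ : Finset (Fin N)) ×ˢ
    Finset.powersetCard m (Finset.univ : Finset (Fin M)) with h𝒞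
  set θ := T / √((n : ℝ) * m) with hθ
  have hlin := laplace (ι := Fin N × Fin M) hh hprob (fun _ => s0) (fun _ => 1 / √((N : ℝ) * M))
    (fun _ => hs0) (fun _ => h1) H
  have hbox : ∀ PQ : Finset (Fin N) × Finset (Fin M), _ := fun PQ =>
    laplace (ι := Fin N × Fin M) hh hprob (fun _ => s0) (boxW PQ.1 PQ.2 θ)
    (fun _ => hs0) (fun ij => by unfold boxW; split_ifs <;> simp [h2, hs0]) (T ^ 2)
  have hpt : ∀ y : (Fin N × Fin M) → ℝ, psiStar N M n m H T y ≤
      Real.exp (∑ ij, 1 / √((N : ℝ) * M) * y ij - H) +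
      ∑ PQ ∈ 𝒞, Real.exp (∑ ij, boxW PQ.1 PQ.2 θ ij * y ij - T ^ 2) := by
    intro y
    have hnn : 0 ≤ ∑ PQ ∈ 𝒞, Real.exp (∑ ij, boxW PQ.1 PQ.2 θ ij * y ij - T ^ 2) :=
      Finset.sum_nonneg fun _ _ => (Real.exp_pos _).le
    by_cases hy1 : H < tlin N M y
    · rw [psiStar_lin hy1]
      have : 1 ≤ Real.exp (∑ ij, 1 / √((N : ℝ) * M) * y ij - H) := by
        rw [Real.one_le_exp_iff, ← Finset.mul_sum]
        unfold tlin at hy1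
        have : 1 / √((N : ℝ) * M) * ∑ i, y i = (∑ i, y i) / √((N : ℝ) * M) := by ring
        linarith
      linarith
    by_cases hy2 : T < tmax N M n m y
    · rw [psiStar_max hy2]
      have hne : {v | ∃ (P : Finset (Fin N)) (Q : Finset (Fin M)),
          P.card = n ∧ Q.card = m ∧ v = YC N M y P Q}.Nonempty := by
        obtain ⟨P, -, hP⟩ := Finset.exists_subset_card_eq (s := (Finset.univ : Finset (Fin N)))
          (n := n) (by simpa using hnN)
        obtain ⟨Q, -, hQ⟩ := Finset.exists_subset_card_eq (s := (Finset.univ : Finset (Fin M)))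
          (n := m) (by simpa using hmM)
        exact ⟨_, P, Q, hP, hQ, rfl⟩
      obtain ⟨v, ⟨P, Q, hP, hQ, rfl⟩, hv⟩ := exists_lt_of_lt_csSup hne hy2
      have hmem : (P, Q) ∈ 𝒞 := by simp [h𝒞, Finset.mem_powersetCard, hP, hQ]
      have h3 := Finset.single_le_sum
        (f := fun PQ : Finset (Fin N) × Finset (Fin M) =>
          Real.exp (∑ ij, boxW PQ.1 PQ.2 θ ij * y ij - T ^ 2))
        (fun _ _ => (Real.exp_pos _).le) hmem
      have h4 : 1 ≤ Real.exp (∑ ij, boxW P Q θ ij * y ij - T ^ 2) := by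
        rw [Real.one_le_exp_iff, sum_boxW]
        unfold YC at hv
        rw [hP, hQ] at hv
        have : θ * ∑ i ∈ P, ∑ j ∈ Q, y (i, j)
          = T * ((∑ i ∈ P, ∑ j ∈ Q, y (i, j)) / √((n : ℝ) * m)) := by rw [hθ]; ring
        rw [this]
        nlinarith
      have h5 := Real.exp_pos (∑ ij, 1 / √((N : ℝ) * M) * y ij - H)
      simp only at h3
      linarith
    · rw [psiStar_zero hy1 hy2]
      positivity
  unfold alphaExp expMatLaw
  refine (integral_mono_of_nonneg (ae_of_all _ fun y => psiStar_nonneg _ _ _ _ _ _ y) ?_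
    (ae_of_all _ hpt)).trans ?_
  · exact hlin.1.add (integrable_finsetSum _ fun PQ _ => (hbox PQ).1)
  rw [integral_add hlin.1 (integrable_finsetSum _ fun PQ _ => (hbox PQ).1), hlin.2,
    integral_finsetSum _ fun PQ _ => (hbox PQ).1]
  have hs : ∀ PQ ∈ 𝒞, ∫ y : (Fin N × Fin M) → ℝ,
      Real.exp (∑ ij, boxW PQ.1 PQ.2 θ ij * y ij - T ^ 2) ∂(Measure.pi fun _ => expLaw μ h A s0)
      = Real.exp ((n : ℝ) * m * (A (s0 + θ) - A s0) - T ^ 2) := by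
    rintro ⟨P, Q⟩ hPQ
    simp only [h𝒞, Finset.mem_product, Finset.mem_powersetCard] at hPQ
    rw [(hbox (P, Q)).2]
    congr 2
    have : ∀ ij : Fin N × Fin M, A (s0 + boxW P Q θ ij) - A s0
        = if ij.1 ∈ P ∧ ij.2 ∈ Q then A (s0 + θ) - A s0 else 0 := by
      intro ij; unfold boxW; split_ifs <;> simp
    simp only [this]
    rw [sum_box P Q (fun _ => A (s0 + θ) - A s0)]
    simp only [Finset.sum_const, hPQ.1.2, hPQ.2.2, nsmul_eq_mul]
    ring
  rw [Finset.sum_congr rfl hs, Finset.sum_const]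
  simp [h𝒞, Gnm, Finset.card_powersetCard]

/-- Chernoff bound for the second-type error through the linear statistic. -/
lemma beta_lin (hh : Measurable h) (hprob : ∀ s ∈ I, IsProbabilityMeasure (expLaw μ h A s))
    {N M n m : ℕ} {H T θ : ℝ} (hθ : θ = 1 / √((N : ℝ) * M)) {S : Fin N → Fin M → ℝ}
    (hS : ∀ i j, S i j ∈ I) (hSθ : ∀ i j, S i j - θ ∈ I) :
    betaExp μ h A N M S (psiStar N M n m H T)
      ≤ Real.exp (∑ ij : Fin N × Fin M, (A (S ij.1 ij.2 - θ) - A (S ij.1 ij.2)) + H) := by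
  have hl := laplace (ι := Fin N × Fin M) hh hprob (fun ij => S ij.1 ij.2) (fun _ => -θ)
    (fun ij => hS ij.1 ij.2) (fun ij => by simpa [sub_eq_add_neg] using hSθ ij.1 ij.2) (-H)
  unfold betaExp expMatLaw
  refine (integral_mono_of_nonneg (ae_of_all _ fun y => ?_) hl.1
    (ae_of_all _ fun y => ?_)).trans ?_
  · simpa using psiStar_le_one N M n m H T y
  · simp only
    by_cases hy : H < tlin N M y
    · rw [psiStar_lin hy]; simp [Real.exp_nonneg]
    · have h0 := psiStar_nonneg N M n m H T y
      have : 1 ≤ Real.exp (∑ i, -θ * y i - -H) := by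
        rw [Real.one_le_exp_iff, ← Finset.mul_sum]
        unfold tlin at hy
        have : -θ * ∑ i, y i = -((∑ i, y i) / √((N : ℝ) * M)) := by rw [hθ]; ring
        linarith
      linarith
  · rw [hl.2]
    simp only [sub_neg_eq_add]
    simp only [sub_eq_add_neg, le_refl]

/-- Chernoff bound for the second-type error through the scan statistic, using only `Y_C` for the
true submatrix `C = P × Q`. -/
lemma beta_scan (hh : Measurable h) (hprob : ∀ s ∈ I, IsProbabilityMeasure (expLaw μ h A s))
    {N M n m : ℕ} {H T θ κ : ℝ} (hθ : 0 ≤ θ) (hn : 1 ≤ n) (hm : 1 ≤ m) {S : Fin N → Fin M → ℝ}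
    {P : Finset (Fin N)} {Q : Finset (Fin M)} (hP : P.card = n) (hQ : Q.card = m)
    (hS : ∀ i j, S i j ∈ I) (hSθ : ∀ i j, i ∈ P → j ∈ Q → S i j - θ ∈ I)
    (hκ : ∀ i j, i ∈ P → j ∈ Q → A (S i j - θ) - A (S i j) ≤ -κ) :
    betaExp μ h A N M S (psiStar N M n m H T)
      ≤ Real.exp (θ * (T * √((n : ℝ) * m)) - (n : ℝ) * m * κ) := by
  have hl := laplace (ι := Fin N × Fin M) hh hprob (fun ij => S ij.1 ij.2) (boxW P Q (-θ))
    (fun ij => hS ij.1 ij.2) (fun ij => by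
      unfold boxW; split_ifs with hc
      · simpa [sub_eq_add_neg] using hSθ ij.1 ij.2 hc.1 hc.2
      · simpa using hS ij.1 ij.2) (-(θ * (T * √((n : ℝ) * m))))
  have hpos : 0 < √((n : ℝ) * m) := by
    have : (0 : ℝ) < n := by exact_mod_cast hn
    have : (0 : ℝ) < m := by exact_mod_cast hm
    positivity
  unfold betaExp expMatLaw
  refine (integral_mono_of_nonneg (ae_of_all _ fun y => ?_) hl.1
    (ae_of_all _ fun y => ?_)).trans ?_
  · simpa using psiStar_le_one N M n m H T y
  · simp only
    by_cases hy : T < tmax N M n m y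
    · rw [psiStar_max hy]; simp [Real.exp_nonneg]
    · have h0 := psiStar_nonneg N M n m H T y
      have : 1 ≤ Real.exp (∑ ij, boxW P Q (-θ) ij * y ij - -(θ * (T * √((n : ℝ) * m)))) := by
        rw [Real.one_le_exp_iff, sum_boxW]
        have h1 := (YC_le_tmax y hP hQ).trans (not_lt.1 hy)
        unfold YC at h1
        rw [hP, hQ, div_le_iff₀ hpos] at h1
        nlinarith
      linarith
  · rw [hl.2, Real.exp_le_exp]
    have : ∀ ij : Fin N × Fin M, A (S ij.1 ij.2 + boxW P Q (-θ) ij) - A (S ij.1 ij.2)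
        ≤ if ij.1 ∈ P ∧ ij.2 ∈ Q then -κ else 0 := by
      intro ij; unfold boxW; split_ifs with hc
      · simpa [sub_eq_add_neg] using hκ ij.1 ij.2 hc.1 hc.2
      · simp
    have h2 := Finset.sum_le_sum (s := Finset.univ) fun ij _ => this ij
    rw [sum_box P Q (fun _ => -κ)] at h2
    simp only [Finset.sum_const, hP, hQ, nsmul_eq_mul] at h2
    linarith

end Errors

/-! ### Growth of `G_{nm}` and of the threshold -/

section Asymptotics

lemma log_choose_le {N n : ℕ} (hn : 1 ≤ n) (hnN : n ≤ N) :
    Real.log (N.choose n : ℝ) ≤ n * (Real.log ((N : ℝ) / n) + 1) := by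
  have hn0 : (0 : ℝ) < n := by exact_mod_cast hn
  have hN0 : (0 : ℝ) < N := by exact_mod_cast lt_of_lt_of_le hn hnN
  have h1 : (N.choose n : ℝ) ≤ (N : ℝ) ^ n / n.factorial := Nat.choose_le_pow_div n N
  have h2 : (n : ℝ) ^ n / n.factorial ≤ Real.exp n := Real.pow_div_factorial_le_exp _ hn0.le n
  have h3 : (N.choose n : ℝ) ≤ ((N : ℝ) / n) ^ n * Real.exp n := by
    refine h1.trans ?_
    calc (N : ℝ) ^ n / n.factorial = ((N : ℝ) / n) ^ n * ((n : ℝ) ^ n / n.factorial) := by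
          rw [div_pow]; field_simp
      _ ≤ _ := by gcongr
  have hc : (0 : ℝ) < N.choose n := by exact_mod_cast Nat.choose_pos hnN
  refine (Real.log_le_log hc h3).trans (le_of_eq ?_)
  rw [Real.log_mul (by positivity) (by positivity), Real.log_pow, Real.log_exp]
  ring

lemma div_le_choose {N n : ℕ} (hn : 1 ≤ n) (hnN : n ≤ N) :
    (N : ℝ) / n ≤ N.choose n := by
  have hn0 : (0 : ℝ) < n := by exact_mod_cast hn
  rw [div_le_iff₀ hn0]
  obtain ⟨k, rfl⟩ : ∃ k, n = k + 1 := ⟨n - 1, by omega⟩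
  obtain ⟨K, rfl⟩ : ∃ K, N = K + 1 := ⟨N - 1, by omega⟩
  have h1 := Nat.add_one_mul_choose_eq K k
  have h2 : 1 ≤ K.choose k := Nat.choose_pos (by omega)
  have : K + 1 ≤ (K + 1).choose (k + 1) * (k + 1) := by rw [← h1]; nlinarith
  exact_mod_cast this

variable {N M n m : ℕ → ℕ}

lemma logG_tendsto (hb : ∀ t, 1 ≤ n t ∧ n t ≤ N t ∧ 1 ≤ m t ∧ m t ≤ M t)
    (hp : Tendsto (fun t => (n t : ℝ) / N t) atTop (nhds 0)) :
    Tendsto (fun t => Real.log (Gnm (N t) (M t) (n t) (m t) : ℝ)) atTop atTop := by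
  have hpos : ∀ t, (0 : ℝ) < (n t : ℝ) / N t := fun t => by
    have h1 : (0 : ℝ) < n t := by exact_mod_cast (hb t).1
    have h2 : (0 : ℝ) < N t := by exact_mod_cast lt_of_lt_of_le (hb t).1 (hb t).2.1
    positivity
  have hinv : Tendsto (fun t => ((n t : ℝ) / N t)⁻¹) atTop atTop :=
    Tendsto.inv_tendsto_nhdsGT_zero
      (tendsto_nhdsWithin_iff.2 ⟨hp, Eventually.of_forall hpos⟩)
  refine Real.tendsto_log_atTop.comp (tendsto_atTop_mono (fun t => ?_) hinv)
  rw [inv_div]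
  refine (div_le_choose (hb t).1 (hb t).2.1).trans ?_
  rw [Gnm]
  exact_mod_cast Nat.le_mul_of_pos_right _ (Nat.choose_pos (hb t).2.2.2)

lemma logG_div_tendsto (hb : ∀ t, 1 ≤ n t ∧ n t ≤ N t ∧ 1 ≤ m t ∧ m t ≤ M t)
    (hn : Tendsto n atTop atTop) (hm : Tendsto m atTop atTop)
    (htend : Tendsto (fun t =>
        Real.log ((N t : ℝ) / n t) / m t + Real.log ((M t : ℝ) / m t) / n t)
      atTop (nhds 0)) :
    Tendsto (fun t => Real.log (Gnm (N t) (M t) (n t) (m t) : ℝ) / ((n t : ℝ) * m t))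
      atTop (nhds 0) := by
  have hn' : Tendsto (fun t => 1 / (n t : ℝ)) atTop (nhds 0) :=
    tendsto_one_div_atTop_nhds_zero_nat.comp hn
  have hm' : Tendsto (fun t => 1 / (m t : ℝ)) atTop (nhds 0) :=
    tendsto_one_div_atTop_nhds_zero_nat.comp hm
  have hsum := (htend.add hn').add hm'
  simp only [add_zero] at hsum
  refine squeeze_zero (fun t => ?_) (fun t => ?_) hsum
  · have : (0 : ℝ) ≤ Real.log (Gnm (N t) (M t) (n t) (m t) : ℝ) := Real.log_natCast_nonneg _
    positivity
  · obtain ⟨h1, h2, h3, h4⟩ := hb t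
    have hn0 : (0 : ℝ) < n t := by exact_mod_cast h1
    have hm0 : (0 : ℝ) < m t := by exact_mod_cast h3
    have hc1 : ((N t).choose (n t) : ℝ) ≠ 0 := by exact_mod_cast (Nat.choose_pos h2).ne'
    have hc2 : ((M t).choose (m t) : ℝ) ≠ 0 := by exact_mod_cast (Nat.choose_pos h4).ne'
    rw [Gnm, Nat.cast_mul, Real.log_mul hc1 hc2, div_le_iff₀ (by positivity)]
    refine (add_le_add (log_choose_le h1 h2) (log_choose_le h3 h4)).trans (le_of_eq ?_)
    field_simp
    ring

lemma scale_tendsto (hb : ∀ t, 1 ≤ n t ∧ n t ≤ N t ∧ 1 ≤ m t ∧ m t ≤ M t)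
    (hN : Tendsto N atTop atTop) :
    Tendsto (fun t => 1 / √((N t : ℝ) * M t)) atTop (nhds 0) := by
  have h1 : Tendsto (fun t => √((N t : ℝ) * M t)) atTop atTop := by
    refine Real.tendsto_sqrt_atTop.comp ?_
    refine tendsto_atTop_mono (fun t => ?_) (tendsto_natCast_atTop_atTop.comp hN)
    have : (1 : ℝ) ≤ M t := by exact_mod_cast (hb t).2.2.1.trans (hb t).2.2.2
    simp only [Function.comp]
    nlinarith [(Nat.cast_nonneg (N t) : (0 : ℝ) ≤ N t)]
  simp only [one_div]
  exact h1.inv_tendsto_atTop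

lemma threshold_tendsto {L T : ℕ → ℝ} {δ : ℝ}
    (hT : ∀ t, T t = √((2 + δ) * L t))
    (hL : Tendsto (fun t => L t / ((n t : ℝ) * m t)) atTop (nhds 0)) :
    Tendsto (fun t => T t / √((n t : ℝ) * m t)) atTop (nhds 0) := by
  have h1 := (hL.const_mul (2 + δ)).sqrt
  simp only [mul_zero, Real.sqrt_zero] at h1
  refine h1.congr fun t => ?_
  rw [hT, ← mul_div_assoc, Real.sqrt_div' _ (by positivity)]

end Asymptotics

/-! ### The two errors tend to zero -/

section Limits

variable {μ : Measure ℝ} {h A : ℝ → ℝ} {I : Set ℝ} {s0 : ℝ} {N M n m : ℕ → ℕ} {a H T : ℕ → ℝ}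

/-- With tilt `T/√(nm) → 0` the scan exponent is `-(1 - o(1)) T²/2`, which beats `log G_{nm}`
because `T² = (2+δ) log G_{nm}`. -/
lemma alpha_tendsto (hh : Measurable h) (hprob : ∀ s ∈ I, IsProbabilityMeasure (expLaw μ h A s))
    (hd : ∀ s ∈ I, DifferentiableAt ℝ A s) (hI : IsOpen I) (hs0 : s0 ∈ I)
    (hd1 : HasDerivAt A 0 s0) (hd2 : HasDerivAt (deriv A) 1 s0) {δ : ℝ} (hδ : 0 < δ) (hδ1 : δ ≤ 1)
    (hb : ∀ t, 1 ≤ n t ∧ n t ≤ N t ∧ 1 ≤ m t ∧ m t ≤ M t)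
    (hLG : Tendsto (fun t => Real.log (Gnm (N t) (M t) (n t) (m t) : ℝ)) atTop atTop)
    (hsc : Tendsto (fun t => 1 / √((N t : ℝ) * M t)) atTop (nhds 0))
    (hH : Tendsto H atTop atTop)
    (hTn : Tendsto (fun t => T t / √((n t : ℝ) * m t)) atTop (nhds 0))
    (hT : ∀ t, T t = √((2 + δ) * Real.log (Gnm (N t) (M t) (n t) (m t) : ℝ))) :
    Tendsto (fun t => alphaExp μ h A (N t) (M t) s0
      (psiStar (N t) (M t) (n t) (m t) (H t) (T t))) atTop (nhds 0) := by
  obtain ⟨r, hr, hloc, hquad⟩ := local_bounds hd hI hs0 hd1 hd2 (ε := δ / 4) (by linarith)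
  have hlim : Tendsto (fun t => Real.exp (-(H t + -1)) +
      Real.exp (-(δ / 8 * Real.log (Gnm (N t) (M t) (n t) (m t) : ℝ)))) atTop (nhds 0) := by
    have h1 := Real.tendsto_exp_neg_atTop_nhds_zero.comp (tendsto_atTop_add_const_right _ (-1) hH)
    have h2 := Real.tendsto_exp_neg_atTop_nhds_zero.comp
      (hLG.const_mul_atTop (show 0 < δ / 8 by linarith))
    simpa [Function.comp_def] using h1.add h2
  refine squeeze_zero' (Eventually.of_forall fun t => ?_) ?_ hlim
  · exact integral_nonneg fun y => psiStar_nonneg _ _ _ _ _ _ y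
  filter_upwards [hsc.eventually_le_const hr, hTn.eventually_le_const hr] with t ht1 ht2
  obtain ⟨hn1, hnN, hm1, hmM⟩ := hb t
  have hn0 : (0 : ℝ) < n t := by exact_mod_cast hn1
  have hm0 : (0 : ℝ) < m t := by exact_mod_cast hm1
  have hN0 : (0 : ℝ) < N t := by exact_mod_cast lt_of_lt_of_le hn1 hnN
  have hM0 : (0 : ℝ) < M t := by exact_mod_cast lt_of_lt_of_le hm1 hmM
  have hT0 : 0 ≤ T t := by rw [hT]; positivity
  set G := Gnm (N t) (M t) (n t) (m t) with hG
  have hL0 : 0 ≤ Real.log (G : ℝ) := Real.log_natCast_nonneg _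
  have hG0 : (0 : ℝ) < G := by
    exact_mod_cast Nat.mul_pos (Nat.choose_pos hnN) (Nat.choose_pos hmM)
  have hu1 : 0 ≤ 1 / √((N t : ℝ) * M t) := by positivity
  have hu2 : 0 ≤ T t / √((n t : ℝ) * m t) := by positivity
  refine (alpha_bound hh hprob hs0 hnN hmM hT0 (hloc _ (by rwa [abs_of_nonneg hu1])).1
    (hloc _ (by rwa [abs_of_nonneg hu2])).1).trans ?_
  have q1 := hquad _ hu1 ht1
  have q2 := hquad _ hu2 ht2
  rw [div_pow, Real.sq_sqrt (by positivity)] at q1 q2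
  refine add_le_add ?_ ?_
  · rw [Real.exp_le_exp]
    have : (N t : ℝ) * M t * (A (s0 + 1 / √((N t : ℝ) * M t)) - A s0) ≤ (1 + δ / 4) / 2 := by
      refine (mul_le_mul_of_nonneg_left q1 (by positivity)).trans (le_of_eq ?_)
      field_simp
    linarith
  · have h1 : (n t : ℝ) * m t * (A (s0 + T t / √((n t : ℝ) * m t)) - A s0)
        ≤ (1 + δ / 4) / 2 * T t ^ 2 := by
      refine (mul_le_mul_of_nonneg_left q2 (by positivity)).trans (le_of_eq ?_)
      field_simp
    have h2 : T t ^ 2 = (2 + δ) * Real.log (G : ℝ) := by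
      rw [hT, Real.sq_sqrt (by positivity)]
    nth_rewrite 1 [← Real.exp_log hG0]
    rw [← Real.exp_add, Real.exp_le_exp]
    rw [h2] at h1 ⊢
    -- `1 - (1 - δ/4)(1 + δ/2) = -δ/4 + δ²/8 ≤ -δ/8`
    have h3 : 0 ≤ δ * (1 - δ) * Real.log (G : ℝ) := by
      have : 0 ≤ 1 - δ := by linarith
      positivity
    nlinarith

set_option maxHeartbeats 1600000 in
/-- Uniform control of the second-type error. The radius `r` is such that
`|A'(s⁰+u) - u| ≤ ε|u|` for `|u| ≤ r`; the linear statistic is used when `a ≤ r/2`, and the scan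
statistic when `a > r/2`. -/
lemma beta_tendsto (hh : Measurable h) (hprob : ∀ s ∈ I, IsProbabilityMeasure (expLaw μ h A s))
    (hconv : ConvexOn ℝ I A)
    (hd : ∀ s ∈ I, DifferentiableAt ℝ A s) (hI : IsOpen I) (hI' : I.OrdConnected) (hs0 : s0 ∈ I)
    (hd1 : HasDerivAt A 0 s0) (hd2 : HasDerivAt (deriv A) 1 s0)
    (hb : ∀ t, 1 ≤ n t ∧ n t ≤ N t ∧ 1 ≤ m t ∧ m t ≤ M t)
    (hn : Tendsto n atTop atTop)
    (ha : ∀ t, 0 < a t)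
    (hsc : Tendsto (fun t => 1 / √((N t : ℝ) * M t)) atTop (nhds 0))
    (hH : Tendsto H atTop atTop)
    (hHc : ∃ c : ℝ, 0 < c ∧ c < 1 ∧ ∀ t,
      H t < c * (deriv A (s0 + a t) *
        Real.sqrt ((n t : ℝ) * m t * ((n t : ℝ) / N t) * ((m t : ℝ) / M t))))
    (hTn : Tendsto (fun t => T t / √((n t : ℝ) * m t)) atTop (nhds 0)) :
    Tendsto (fun t => betaMaxExp μ h A (N t) (M t) (n t) (m t) I s0 (a t)
      (psiStar (N t) (M t) (n t) (m t) (H t) (T t))) atTop (nhds 0) := by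
  obtain ⟨c, hc0, hc1, hHc⟩ := hHc
  set ε := (1 - c) / 4 with hε
  have hε0 : 0 < ε := by linarith
  obtain ⟨r, hr, hloc, -⟩ := local_bounds hd hI hs0 hd1 hd2 hε0
  set κ := deriv A (s0 + r / 4) with hκ
  have hκ0 : 0 < κ := by
    have h1 := (hloc (r / 4) (by rw [abs_of_pos (by linarith)]; linarith)).2
    rw [abs_of_pos (by linarith : 0 < r / 4)] at h1
    have := (abs_le.1 h1).1
    nlinarith
  have hlim : Tendsto (fun t => Real.exp (-((1 - c) / 2 * H t + -2)) +
      Real.exp (-(r / 4 * (κ / 2) * (n t : ℝ)))) atTop (nhds 0) := by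
    have h1 := Real.tendsto_exp_neg_atTop_nhds_zero.comp (tendsto_atTop_add_const_right _ (-2)
      (hH.const_mul_atTop (show 0 < (1 - c) / 2 by linarith)))
    have h2 := Real.tendsto_exp_neg_atTop_nhds_zero.comp
      ((tendsto_natCast_atTop_atTop.comp hn).const_mul_atTop
        (show 0 < r / 4 * (κ / 2) by positivity))
    simpa [Function.comp_def] using h1.add h2
  refine squeeze_zero' (Eventually.of_forall fun t => ?_) ?_ hlim
  · refine Real.sSup_nonneg ?_
    rintro _ ⟨S, -, rfl⟩
    exact integral_nonneg fun y => sub_nonneg.2 (psiStar_le_one _ _ _ _ _ _ y)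
  filter_upwards [hsc.eventually_le_const (half_pos hr),
    hTn.eventually_le_const (half_pos hκ0), hH.eventually_gt_atTop 0] with t ht1 ht2 ht3
  obtain ⟨hn1, hnN, hm1, hmM⟩ := hb t
  have hn0 : (1 : ℝ) ≤ n t := by exact_mod_cast hn1
  have hm0 : (1 : ℝ) ≤ m t := by exact_mod_cast hm1
  have hN0 : (0 : ℝ) < N t := by exact_mod_cast lt_of_lt_of_le hn1 hnN
  have hM0 : (0 : ℝ) < M t := by exact_mod_cast lt_of_lt_of_le hm1 hmM
  refine Real.sSup_le ?_ (by positivity)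
  rintro _ ⟨S, ⟨hSI, P, Q, hP, hQ, hin, hout⟩, rfl⟩
  simp only
  rcases le_or_gt (a t) (r / 2) with har | har
  · -- weak signal: the linear statistic detects
    refine le_trans ?_ (le_add_of_nonneg_right (Real.exp_pos _).le)
    set θ := 1 / √((N t : ℝ) * M t) with hθ
    have hsq : 0 < √((N t : ℝ) * M t) := by positivity
    have hθ0 : 0 < θ := by positivity
    have hθ2 : (N t : ℝ) * M t * θ ^ 2 = 1 := by
      rw [hθ, div_pow, Real.sq_sqrt (by positivity)]; field_simp
    set D := deriv A (s0 + a t) with hD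
    have hE : √((n t : ℝ) * m t * ((n t : ℝ) / N t) * ((m t : ℝ) / M t)) = n t * m t * θ := by
      have : (n t : ℝ) * m t * ((n t : ℝ) / N t) * ((m t : ℝ) / M t)
          = ((n t : ℝ) * m t) ^ 2 / (N t * M t) := by field_simp
      rw [this, Real.sqrt_div (by positivity), Real.sqrt_sq (by positivity), hθ]
      ring
    have hHt := hHc t
    rw [hE] at hHt
    have hat := ha t
    -- derivative bounds at the two tilted base points
    have hb0 := hloc (-θ) (by rw [abs_neg, abs_of_pos hθ0]; linarith)
    have hba := hloc (a t - θ) (by rw [abs_le]; constructor <;> linarith)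
    have hDa := (hloc (a t) (by rw [abs_of_pos hat]; linarith)).2
    rw [abs_of_pos hat, abs_le] at hDa
    have hd0 : -(2 * θ) ≤ deriv A (s0 - θ) := by
      have := (abs_le.1 hb0.2).1
      rw [abs_neg, abs_of_pos hθ0, ← sub_eq_add_neg] at this
      nlinarith
    have hda : (1 + c) / 2 * D - 2 * θ ≤ deriv A (s0 + a t - θ) := by
      have h1 := (abs_le.1 hba.2).1
      rw [← add_sub_assoc] at h1
      have h2 : |a t - θ| ≤ a t + θ := by rw [abs_le]; constructor <;> linarith
      have h3 : D ≤ (1 + ε) * a t := by linarith [hDa.2]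
      have h4 : (1 + c) / 2 * D ≤ (1 - ε) * a t := by
        have h5 : (1 + c) / 2 * (1 + ε) ≤ 1 - ε := by rw [hε]; nlinarith
        calc (1 + c) / 2 * D ≤ (1 + c) / 2 * ((1 + ε) * a t) := by gcongr
          _ = (1 + c) / 2 * (1 + ε) * a t := by ring
          _ ≤ _ := by gcongr
      nlinarith
    have htilt : ∀ i j, S i j - θ ∈ I ∧ A (S i j - θ) - A (S i j) ≤
        2 * θ ^ 2 + if i ∈ P ∧ j ∈ Q then -(θ * ((1 + c) / 2 * D)) else 0 := by
      intro i j
      by_cases hij : i ∈ P ∧ j ∈ Q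
      · have := tilt_down hconv hd hI' (hSI i j) (b := s0 + a t) (θ := θ)
          (by rw [add_sub_assoc]; exact hba.1) (hin i j hij.1 hij.2) hθ0
        refine ⟨this.1, this.2.trans ?_⟩
        rw [if_pos hij]
        nlinarith
      · have := tilt_down hconv hd hI' (hSI i j) (b := s0) (θ := θ)
          (by rw [sub_eq_add_neg]; exact hb0.1) (hout i j hij).ge hθ0
        refine ⟨this.1, this.2.trans ?_⟩
        rw [if_neg hij]
        nlinarith
    refine (beta_lin hh hprob hθ hSI fun i j => (htilt i j).1).trans ?_
    rw [Real.exp_le_exp]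
    have hsum := Finset.sum_le_sum (s := (Finset.univ : Finset (Fin (N t) × Fin (M t))))
      fun ij _ => (htilt ij.1 ij.2).2
    rw [Finset.sum_add_distrib, sum_box P Q (fun _ => -(θ * ((1 + c) / 2 * D)))] at hsum
    simp only [Finset.sum_const, hP, hQ, nsmul_eq_mul, Finset.card_univ, Fintype.card_prod,
      Fintype.card_fin, Nat.cast_mul] at hsum
    set E := D * (n t * m t * θ) with hEdef
    have hE0 : 0 < E := by
      by_contra hneg
      nlinarith
    have hEH : H t ≤ E := by nlinarith
    have e1 : (n t : ℝ) * (m t * -(θ * ((1 + c) / 2 * D))) = -((1 + c) / 2 * E) := by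
      rw [hEdef]; ring
    nlinarith
  · -- strong signal: the scan statistic detects
    refine le_trans ?_ (le_add_of_nonneg_left (Real.exp_pos _).le)
    have hr4 : s0 + r / 4 ∈ I := (hloc (r / 4) (by rw [abs_of_pos (by linarith)]; linarith)).1
    have hmem : s0 + r / 2 - r / 4 ∈ I := by
      have : s0 + r / 2 - r / 4 = s0 + r / 4 := by ring
      rwa [this]
    have htilt : ∀ i j, i ∈ P → j ∈ Q → S i j - r / 4 ∈ I ∧
        A (S i j - r / 4) - A (S i j) ≤ -(r / 4 * κ) := by
      intro i j hi hj
      have := tilt_down hconv hd hI' (hSI i j) (b := s0 + r / 2) (θ := r / 4) hmem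
        (by linarith [hin i j hi hj]) (by linarith)
      refine ⟨this.1, this.2.trans (le_of_eq ?_)⟩
      rw [hκ, show s0 + r / 2 - r / 4 = s0 + r / 4 by ring]
      ring
    refine (beta_scan hh hprob (θ := r / 4) (κ := r / 4 * κ) (by linarith) hn1 hm1 hP hQ hSI
      (fun i j hi hj => (htilt i j hi hj).1) (fun i j hi hj => (htilt i j hi hj).2)).trans ?_
    rw [Real.exp_le_exp]
    have hsq : 0 < √((n t : ℝ) * m t) := by positivity
    rw [div_le_iff₀ hsq] at ht2
    have hss : √((n t : ℝ) * m t) * √((n t : ℝ) * m t) = n t * m t :=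
      Real.mul_self_sqrt (by positivity)
    have h1 : T t * √((n t : ℝ) * m t) ≤ κ / 2 * (n t * m t) := by
      calc _ ≤ κ / 2 * √((n t : ℝ) * m t) * √((n t : ℝ) * m t) := by gcongr
        _ = _ := by rw [mul_assoc, hss]
    have h2 : (n t : ℝ) ≤ n t * m t := by nlinarith
    have h3 : r / 4 * (T t * √((n t : ℝ) * m t)) ≤ r / 4 * (κ / 2 * (n t * m t)) := by gcongr
    have h4 : r / 4 * (κ / 2) * (n t : ℝ) ≤ r / 4 * (κ / 2) * (n t * m t) := by gcongr
    linarith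

end Limits

/-- Theorem 6 (exponential family, upper bounds): if
`A'(s⁰+a)√(nmpq) → ∞` or `liminf A'(s⁰+a)√(nm)/√(2(n log(1/p)+m log(1/q))) > 1`,
then `ψ* = max{ψ^lin_H, ψ^max_T}` with `H → ∞`, `H < c A'(s⁰+a)√(nmpq)` for some
`c ∈ (0,1)`, and `T_{nm} = √((2+δ) log G_{nm})` for sufficiently small `δ > 0`
satisfies `γ_{nm,a}(ψ*) → 0`. -/
theorem stmt10 (μ : Measure ℝ) [SigmaFinite μ] (h : ℝ → ℝ) (A : ℝ → ℝ)
    (I : Set ℝ) (s0 : ℝ)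
    (hh : Measurable h) (hh0 : ∀ y, 0 ≤ h y)
    (hI : IsOpen I) (hI' : I.OrdConnected) (hs0 : s0 ∈ I)
    (hA : ∀ s ∈ I, A s = Real.log (∫ y, Real.exp (s * y) * h y ∂μ))
    (hprob : ∀ s ∈ I, IsProbabilityMeasure (expLaw μ h A s))
    (hd1 : HasDerivAt A 0 s0) (hd2 : HasDerivAt (deriv A) 1 s0)
    (N M n m : ℕ → ℕ) (a H : ℕ → ℝ)
    (hb : ∀ t, 1 ≤ n t ∧ n t ≤ N t ∧ 1 ≤ m t ∧ m t ≤ M t)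
    (ha : ∀ t, 0 < a t) (hsa : ∀ t, s0 + a t ∈ I)
    (hN : Tendsto N atTop atTop) (hM : Tendsto M atTop atTop)
    (hn : Tendsto n atTop atTop) (hm : Tendsto m atTop atTop)
    (hp : Tendsto (fun t => (n t : ℝ) / N t) atTop (nhds 0))
    (hq : Tendsto (fun t => (m t : ℝ) / M t) atTop (nhds 0))
    (htend : Tendsto (fun t =>
        Real.log ((N t : ℝ) / n t) / m t + Real.log ((M t : ℝ) / m t) / n t)
      atTop (nhds 0))
    (hH : Tendsto H atTop atTop)
    (hHc : ∃ c : ℝ, 0 < c ∧ c < 1 ∧ ∀ t,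
      H t < c * (deriv A (s0 + a t) *
        Real.sqrt ((n t : ℝ) * m t * ((n t : ℝ) / N t) * ((m t : ℝ) / M t))))
    (hcond :
      Tendsto (fun t => deriv A (s0 + a t) *
          Real.sqrt ((n t : ℝ) * m t * ((n t : ℝ) / N t) * ((m t : ℝ) / M t)))
        atTop atTop ∨
      1 < Filter.liminf (fun t =>
          deriv A (s0 + a t) * Real.sqrt ((n t : ℝ) * m t) /
            Real.sqrt (2 * ((n t : ℝ) * Real.log ((N t : ℝ) / n t) +
              (m t : ℝ) * Real.log ((M t : ℝ) / m t)))) atTop) :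
    ∃ δ₀ : ℝ, 0 < δ₀ ∧ ∀ δ : ℝ, 0 < δ → δ ≤ δ₀ →
      Tendsto (fun t =>
        alphaExp μ h A (N t) (M t) s0 (fun y =>
            max (psiLin (N t) (M t) (H t) y)
              (psiMax (N t) (M t) (n t) (m t)
                (Real.sqrt ((2 + δ) * Real.log (Gnm (N t) (M t) (n t) (m t) : ℝ))) y)) +
          betaMaxExp μ h A (N t) (M t) (n t) (m t) I s0 (a t) (fun y =>
            max (psiLin (N t) (M t) (H t) y)
              (psiMax (N t) (M t) (n t) (m t)
                (Real.sqrt ((2 + δ) * Real.log (Gnm (N t) (M t) (n t) (m t) : ℝ))) y)))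
        atTop (nhds 0) := by
  obtain ⟨hconv, hd⟩ := convex_diff hh hI hI' hs0 hprob
  have hLG := logG_tendsto hb hp
  have hLd := logG_div_tendsto hb hn hm htend
  have hsc := scale_tendsto hb hN
  refine ⟨1, one_pos, fun δ hδ hδ1 => ?_⟩
  set T : ℕ → ℝ := fun t => √((2 + δ) * Real.log (Gnm (N t) (M t) (n t) (m t) : ℝ)) with hTdef
  have hTn : Tendsto (fun t => T t / √((n t : ℝ) * m t)) atTop (nhds 0) :=
    threshold_tendsto (fun t => rfl) hLd
  have hα := alpha_tendsto hh hprob hd hI hs0 hd1 hd2 hδ hδ1 hb hLG hsc hH hTn (fun t => rfl)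
  have hβ := beta_tendsto hh hprob hconv hd hI hI' hs0 hd1 hd2 hb hn ha hsc hH hHc hTn
  have := hα.add hβ
  rw [add_zero] at this
  exact this
end
end

section
/- (Truncated exponential moment bound, truncation at the submatrix sums.) For every T > 0 with b ≥ T/(1+ρ), E_0[exp(−b² + b(Y_{C₁} + Y_{C₂})) · 1{Y_{C₁} ≤ T, Y_{C₂} ≤ T}] ≤ exp(−(T − b)² + ρT²/(1+ρ)). -/
/-!
Put `ρ = kl/(nm)`, `b = a√(nm)` and `c = T/(1+ρ) ≤ b`. On the event `Y_{C₁} ≤ T`, `Y_{C₂} ≤ T`,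
`b (Y_{C₁} + Y_{C₂}) ≤ 2(b - c)T + c (Y_{C₁} + Y_{C₂})`, so the truncated moment is at most
`exp(-b² + 2(b - c)T) · E₀ exp(c (Y_{C₁} + Y_{C₂}))`. The sum `Y_{C₁} + Y_{C₂}` is a centred
Gaussian of variance `2(1+ρ)`, so the last expectation is `exp(c²(1+ρ))`, and the resulting
exponent `-b² + 2bT - T²/(1+ρ)` is exactly the claimed one. The Gaussian moment comes from
`stdGaussian_exp_linear`, and the variance is the squared norm computed in
`sum_sq_indicator_add`.
-/

open MeasureTheory ProbabilityTheory Filter Topology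
open scoped Classical

noncomputable section

/-- Moment generating function of a linear form in i.i.d. standard Gaussian variables. -/
lemma stdGaussian_exp_linear {ι : Type*} [Fintype ι] (w : ι → ℝ) :
    Integrable (fun y : ι → ℝ => Real.exp (∑ i, w i * y i))
        (Measure.pi fun _ : ι => gaussianReal 0 1) ∧
      ∫ y : ι → ℝ, Real.exp (∑ i, w i * y i) ∂(Measure.pi fun _ : ι => gaussianReal 0 1) =
        Real.exp ((∑ i, w i ^ 2) / 2) := by
  simp only [Real.exp_sum]
  refine ⟨Integrable.fintype_prod (f := fun i x => Real.exp (w i * x))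
    fun i => integrable_exp_mul_gaussianReal (w i), ?_⟩
  rw [integral_fintype_prod_eq_prod (f := fun i x => Real.exp (w i * x)), Finset.sum_div,
    Real.exp_sum]
  refine Finset.prod_congr rfl fun i _ => ?_
  have h := congrFun (mgf_fun_id_gaussianReal (μ := 0) (v := 1)) (w i)
  simpa [mgf] using h

lemma sum_sq_indicator_add {ι : Type*} [Fintype ι] [DecidableEq ι] (C D : Finset ι) :
    ∑ i, ((if i ∈ C then (1 : ℝ) else 0) + (if i ∈ D then 1 else 0)) ^ 2 =
      (C.card : ℝ) + D.card + 2 * (C ∩ D).card := by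
  have h : ∀ i, ((if i ∈ C then (1 : ℝ) else 0) + (if i ∈ D then 1 else 0)) ^ 2 =
      (if i ∈ C then 1 else 0) + (if i ∈ D then 1 else 0) +
        2 * (if i ∈ C ∩ D then 1 else 0) := by
    intro i
    by_cases h1 : i ∈ C <;> by_cases h2 : i ∈ D <;> simp [h1, h2] <;> norm_num
  simp only [h, Finset.sum_add_distrib, ← Finset.mul_sum, Finset.sum_boole,
    Finset.filter_univ_mem]

lemma YC_eq_sum (N M : ℕ) (y : (Fin N × Fin M) → ℝ) (A : Finset (Fin N)) (B : Finset (Fin M)) :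
    YC N M y A B = (∑ p, (if p ∈ A ×ˢ B then (1 : ℝ) else 0) * y p) /
      Real.sqrt ((A.card : ℝ) * B.card) := by
  unfold YC
  simp only [ite_mul, one_mul, zero_mul, Finset.sum_ite_mem, Finset.univ_inter,
    Finset.sum_product]

/-- Lemma 1 (2) (truncated exponential moment bound, truncation at the submatrix
sums): for `T > 0` with `b ≥ T/(1+ρ)`,
`E_0[exp(−b² + b(Y_{C₁}+Y_{C₂})) 1{Y_{C₁} ≤ T, Y_{C₂} ≤ T}]
  ≤ exp(−(T−b)² + ρT²/(1+ρ))`. -/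
theorem stmt15 (N M n m : ℕ) (hn1 : 1 ≤ n) (hnN : n ≤ N) (hm1 : 1 ≤ m) (hmM : m ≤ M)
    (a : ℝ) (ha : 0 < a)
    (A1 A2 : Finset (Fin N)) (B1 B2 : Finset (Fin M))
    (hA1 : A1.card = n) (hA2 : A2.card = n) (hB1 : B1.card = m) (hB2 : B2.card = m)
    (T : ℝ) (hT : 0 < T)
    (hbT : T / (1 + ((A1 ∩ A2).card : ℝ) * ((B1 ∩ B2).card : ℝ) / ((n : ℝ) * m)) ≤
      a * Real.sqrt ((n : ℝ) * m)) :
    ∫ y, Real.exp (-(a * Real.sqrt ((n : ℝ) * m)) ^ 2 +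
          a * Real.sqrt ((n : ℝ) * m) * (YC N M y A1 B1 + YC N M y A2 B2)) *
          (if YC N M y A1 B1 ≤ T ∧ YC N M y A2 B2 ≤ T then 1 else 0)
        ∂(matLaw N M fun _ _ => 0) ≤
      Real.exp (-(T - a * Real.sqrt ((n : ℝ) * m)) ^ 2 +
        (((A1 ∩ A2).card : ℝ) * ((B1 ∩ B2).card : ℝ) / ((n : ℝ) * m)) * T ^ 2 /
          (1 + ((A1 ∩ A2).card : ℝ) * ((B1 ∩ B2).card : ℝ) / ((n : ℝ) * m))) := by
  set s := Real.sqrt ((n : ℝ) * m) with hs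
  set b := a * s with hb
  set ρ := ((A1 ∩ A2).card : ℝ) * ((B1 ∩ B2).card : ℝ) / ((n : ℝ) * m) with hρ
  set c := T / (1 + ρ) with hc
  have hnm : (0 : ℝ) < (n : ℝ) * m := by
    have : 0 < n * m := Nat.mul_pos hn1 hm1
    exact_mod_cast this
  have hρ0 : 0 ≤ ρ := by positivity
  have hs0 : 0 < s := Real.sqrt_pos.mpr hnm
  have hs2 : s ^ 2 = (n : ℝ) * m := Real.sq_sqrt hnm.le
  let w : Fin N × Fin M → ℝ := fun p => c / s *
    ((if p ∈ A1 ×ˢ B1 then (1 : ℝ) else 0) + (if p ∈ A2 ×ˢ B2 then 1 else 0))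
  have hlin : ∀ y, c * (YC N M y A1 B1 + YC N M y A2 B2) = ∑ p, w p * y p := by
    intro y
    rw [YC_eq_sum, YC_eq_sum, hA1, hA2, hB1, hB2, ← hs]
    simp only [w, mul_assoc, add_mul, ← Finset.mul_sum, Finset.sum_add_distrib]
    ring
  have hw : (∑ p, w p ^ 2) / 2 = c ^ 2 * (1 + ρ) := by
    simp only [w, mul_pow, ← Finset.mul_sum]
    rw [sum_sq_indicator_add, Finset.product_inter_product, Finset.card_product,
      Finset.card_product, Finset.card_product, hA1, hA2, hB1, hB2, div_pow, hs2, hρ]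
    push_cast
    field_simp
    ring
  obtain ⟨hint, hval⟩ := stdGaussian_exp_linear w
  -- `(b - c)(Y₁ + Y₂) ≤ 2(b - c)T` on the truncation event; off it the integrand vanishes.
  calc _ ≤ ∫ y, Real.exp (-b ^ 2 + 2 * (b - c) * T) * Real.exp (∑ p, w p * y p)
        ∂(Measure.pi fun _ : Fin N × Fin M => gaussianReal 0 1) := by
        refine integral_mono_of_nonneg (ae_of_all _ fun y => ?_) (hint.const_mul _)
          (ae_of_all _ fun y => ?_)
        · dsimp only
          split_ifs <;> simp [Real.exp_nonneg]
        · dsimp only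
          rw [← hlin, ← Real.exp_add]
          split_ifs with h
          · rw [mul_one]
            apply Real.exp_le_exp.mpr
            have h1 := mul_le_mul_of_nonneg_left (add_le_add h.1 h.2) (sub_nonneg.mpr hbT)
            linarith
          · rw [mul_zero]
            exact Real.exp_nonneg _
    _ = _ := by
        rw [integral_const_mul, hval, hw, ← Real.exp_add]
        congr 1
        have : 1 + ρ ≠ 0 := by positivity
        rw [hc]
        field_simp
        ring
end
end

section
/- (Truncated exponential moment bound, truncation at the overlap sum.) Assume kl ≥ 1, so V is nonempty. For every T > 0 with T ≤ 2z_{kl}, E_0[exp(−b² + b(Y_{C₁} + Y_{C₂})) · 1{Y_V ≤ T}] ≤ exp(T²/2 − (T − z_{kl})²). -/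
/-!
The indicator is removed by the Chernoff-type bound `1{Y_V ≤ T} ≤ exp (h (T - Y_V))` with
`h = 2 z_{kl} - T ≥ 0`. The remaining integrand is the exponential of a linear form `∑ c_{ij} y_{ij}`
(up to a constant), whose Gaussian expectation is `exp (∑ c_{ij}² / 2)`, see `integral_exp_linear`.
Here `c = a (1_{C₁} + 1_{C₂}) - (h / √(kl)) 1_V`, and since `1_{C₁} 1_{C₂} = 1_V`,
`∑ c_{ij}² = 2 b² + 2 z² - 4 h z + h²`. For the chosen `h` the total exponent is exactly
`T² / 2 - (T - z)²`.
-/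

open MeasureTheory ProbabilityTheory Filter Topology
open scoped Classical

noncomputable section

/-- The Laplace transform of a standard Gaussian vector, together with the integrability needed
for monotonicity of the integral. -/
lemma integral_exp_linear {ι : Type*} [Fintype ι] (c : ι → ℝ) :
    Integrable (fun y : ι → ℝ => Real.exp (∑ i, c i * y i))
        (Measure.pi fun _ => gaussianReal 0 1) ∧
      ∫ y : ι → ℝ, Real.exp (∑ i, c i * y i) ∂(Measure.pi fun _ => gaussianReal 0 1) =
        Real.exp (∑ i, c i ^ 2 / 2) := by
  simp_rw [Real.exp_sum]
  refine ⟨Integrable.fintype_prod (f := fun i x => Real.exp (c i * x))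
    fun i => integrable_exp_mul_gaussianReal (c i), ?_⟩
  rw [integral_fintype_prod_eq_prod (f := fun i x => Real.exp (c i * x))]
  refine Finset.prod_congr rfl fun i _ => ?_
  have h := congrFun (mgf_id_gaussianReal (μ := 0) (v := 1)) (c i)
  simpa [mgf] using h

/-- Indicator function of the rectangle `A × B`. -/
def rectInd {N M : ℕ} (A : Finset (Fin N)) (B : Finset (Fin M)) (p : Fin N × Fin M) : ℝ :=
  if p ∈ A ×ˢ B then 1 else 0

lemma sum_rectInd_mul {N M : ℕ} (A : Finset (Fin N)) (B : Finset (Fin M))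
    (y : Fin N × Fin M → ℝ) :
    ∑ p, rectInd A B p * y p = ∑ i ∈ A, ∑ j ∈ B, y (i, j) := by
  simp only [rectInd, ite_mul, one_mul, zero_mul]
  rw [Finset.sum_ite_mem, Finset.univ_inter, Finset.sum_product]

lemma sum_rectInd {N M : ℕ} (A : Finset (Fin N)) (B : Finset (Fin M)) :
    ∑ p, rectInd A B p = (A.card : ℝ) * B.card := by
  simpa using sum_rectInd_mul A B fun _ => 1

/-- Squared norm of `a (1_{C₁} + 1_{C₂}) - d 1_V`. -/
lemma sum_coeff_sq {N M : ℕ} (A1 A2 : Finset (Fin N)) (B1 B2 : Finset (Fin M)) (a d : ℝ) :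
    ∑ p, (a * rectInd A1 B1 p + a * rectInd A2 B2 p - d * rectInd (A1 ∩ A2) (B1 ∩ B2) p) ^ 2 / 2 =
      a ^ 2 / 2 * (A1.card * B1.card) + a ^ 2 / 2 * (A2.card * B2.card) +
        (a ^ 2 + d ^ 2 / 2 - 2 * a * d) * ((A1 ∩ A2).card * (B1 ∩ B2).card) := by
  simp only [← sum_rectInd, Finset.mul_sum, ← Finset.sum_add_distrib]
  refine Finset.sum_congr rfl fun p _ => ?_
  have hV : rectInd (A1 ∩ A2) (B1 ∩ B2) p = rectInd A1 B1 p * rectInd A2 B2 p := by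
    simp only [rectInd, Finset.mem_product, Finset.mem_inter]
    split_ifs <;> simp_all
  rw [hV]
  simp only [rectInd]
  split_ifs <;> ring

/-- Lemma 1 (3) (truncated exponential moment bound, truncation at the overlap
sum): if `kl ≥ 1` and `0 < T ≤ 2 z_{kl}`, then
`E_0[exp(−b² + b(Y_{C₁}+Y_{C₂})) 1{Y_V ≤ T}] ≤ exp(T²/2 − (T − z_{kl})²)`. -/
theorem stmt16 (N M n m : ℕ) (hn1 : 1 ≤ n) (hnN : n ≤ N) (hm1 : 1 ≤ m) (hmM : m ≤ M)
    (a : ℝ) (ha : 0 < a)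
    (A1 A2 : Finset (Fin N)) (B1 B2 : Finset (Fin M))
    (hA1 : A1.card = n) (hA2 : A2.card = n) (hB1 : B1.card = m) (hB2 : B2.card = m)
    (hkl : 1 ≤ (A1 ∩ A2).card * (B1 ∩ B2).card)
    (T : ℝ) (hT : 0 < T)
    (hT2 : T ≤ 2 * (a * Real.sqrt (((A1 ∩ A2).card : ℝ) * ((B1 ∩ B2).card : ℝ)))) :
    ∫ y, Real.exp (-(a * Real.sqrt ((n : ℝ) * m)) ^ 2 +
          a * Real.sqrt ((n : ℝ) * m) * (YC N M y A1 B1 + YC N M y A2 B2)) *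
          (if YC N M y (A1 ∩ A2) (B1 ∩ B2) ≤ T then 1 else 0)
        ∂(matLaw N M fun _ _ => 0) ≤
      Real.exp (T ^ 2 / 2 -
        (T - a * Real.sqrt (((A1 ∩ A2).card : ℝ) * ((B1 ∩ B2).card : ℝ))) ^ 2) := by
  set k : ℝ := ((A1 ∩ A2).card : ℝ) with hk
  set l : ℝ := ((B1 ∩ B2).card : ℝ) with hl
  have hkl0 : 0 < k * l := by
    rw [hk, hl]; exact_mod_cast hkl
  have hnm0 : (0 : ℝ) < n * m := by
    have : 0 < n * m := Nat.mul_pos hn1 hm1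
    exact_mod_cast this
  set s := Real.sqrt (k * l) with hs
  have hs0 : 0 < s := Real.sqrt_pos.mpr hkl0
  have hss : s ^ 2 = k * l := Real.sq_sqrt hkl0.le
  set r := Real.sqrt ((n : ℝ) * m) with hr
  have hr0 : 0 < r := Real.sqrt_pos.mpr hnm0
  have hrr : r ^ 2 = (n : ℝ) * m := Real.sq_sqrt hnm0.le
  -- `h` minimises the exponent of the Chernoff bound.
  set h := 2 * (a * s) - T with hh
  have hh0 : 0 ≤ h := by linarith
  set c : Fin N × Fin M → ℝ := fun p =>
    a * rectInd A1 B1 p + a * rectInd A2 B2 p - h / s * rectInd (A1 ∩ A2) (B1 ∩ B2) p with hc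
  have hlin : ∀ y : Fin N × Fin M → ℝ, ∑ p, c p * y p =
      a * r * (YC N M y A1 B1 + YC N M y A2 B2) - h * YC N M y (A1 ∩ A2) (B1 ∩ B2) := by
    intro y
    have h1 : ∑ p, c p * y p = a * ∑ p, rectInd A1 B1 p * y p + a * ∑ p, rectInd A2 B2 p * y p
        - h / s * ∑ p, rectInd (A1 ∩ A2) (B1 ∩ B2) p * y p := by
      simp only [Finset.mul_sum, ← Finset.sum_add_distrib, ← Finset.sum_sub_distrib, hc]
      exact Finset.sum_congr rfl fun p _ => by ring
    rw [h1]
    simp only [sum_rectInd_mul, YC, hA1, hA2, hB1, hB2, ← hk, ← hl, ← hs, ← hr]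
    field_simp
  obtain ⟨hint, hval⟩ := integral_exp_linear c
  have hμ : matLaw N M (fun _ _ => 0) = Measure.pi fun _ => gaussianReal 0 1 := rfl
  rw [hμ]
  calc _ ≤ ∫ y : Fin N × Fin M → ℝ, Real.exp (-(a * r) ^ 2 + h * T) * Real.exp (∑ p, c p * y p)
        ∂(Measure.pi fun _ => gaussianReal 0 1) := by
        refine integral_mono_of_nonneg (ae_of_all _ fun y => ?_) (hint.const_mul _)
          (ae_of_all _ fun y => ?_)
        · dsimp only [Pi.zero_apply]
          split_ifs <;> positivity
        · dsimp only
          rw [← Real.exp_add, hlin]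
          split_ifs with hy
          · rw [mul_one, Real.exp_le_exp]
            nlinarith [mul_nonneg hh0 (sub_nonneg.mpr hy)]
          · rw [mul_zero]; positivity
    _ = _ := by
        rw [integral_const_mul, hval, ← Real.exp_add, hc, sum_coeff_sq, hA1, hA2, hB1, hB2,
          ← hk, ← hl, ← hss, ← hrr]
        congr 1
        field_simp
        rw [hh]
        ring
end
end

section
/- (Binomial stochastically dominates hypergeometric.) For every x ∈ ℝ, P(X ≥ x) ≤ P(X' ≥ x); consequently, for every nondecreasing function g : ℝ → ℝ, E[g(X)] ≤ E[g(X')]. -/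
/-!
Write `M = N - n` and `p = n / M`. The likelihood ratio `P(X' = k) / P(X = k)` is proportional to
`p ^ k * (1 - p) ^ (n - k) / C(M, n - k)`, and it is nondecreasing in `k`: with `m = n - k - 1`,
one step amounts to `(1 - p) * C(M, m) ≤ p * C(M, m + 1)` (`choose_step`), which reduces to
`(M - n) * (m + 1) ≤ n * (M - m)` and so holds because `m + 1 ≤ n`.

A monotone likelihood ratio gives the inequality of expectations (`sum_le_of_cross`) by symmetrization:
`2 (E[g(X')] - E[g(X)])` is the sum over all pairs `(i, j)` of
`(g j - g i) * (P(X = i) P(X' = j) - P(X = j) P(X' = i))`, whose terms are all nonnegative.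
The tail bound is the case where `g` is the indicator of `[x, ∞)`.
-/

open scoped Classical

noncomputable section

/-- Hypergeometric `HG(N,n,n)` point probability. -/
def hgP (N n k : ℕ) : ℝ :=
  (n.choose k * (N - n).choose (n - k) : ℝ) / (N.choose n : ℝ)

/-- Binomial `Bin(n,p)` point probability. -/
def binP (n : ℕ) (p : ℝ) (k : ℕ) : ℝ :=
  (n.choose k : ℝ) * p ^ k * (1 - p) ^ (n - k)

/-- Monotone likelihood ratio, in the cross-multiplied form `hc`, implies domination
of expectations of monotone functions. -/
lemma sum_le_of_cross (n : ℕ) (a b : ℕ → ℝ) (g : ℝ → ℝ) (hg : Monotone g)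
    (ha : ∑ k ∈ Finset.range (n + 1), a k = 1) (hb : ∑ k ∈ Finset.range (n + 1), b k = 1)
    (hc : ∀ i j, i ≤ j → j ≤ n → a j * b i ≤ a i * b j) :
    ∑ k ∈ Finset.range (n + 1), g k * a k ≤ ∑ k ∈ Finset.range (n + 1), g k * b k := by
  have h0 : 0 ≤ ∑ i ∈ Finset.range (n + 1), ∑ j ∈ Finset.range (n + 1),
      (g j - g i) * (a i * b j - a j * b i) := by
    refine Finset.sum_nonneg fun i hi => Finset.sum_nonneg fun j hj => ?_
    rw [Finset.mem_range] at hi hj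
    rcases le_total i j with h | h
    · exact mul_nonneg (sub_nonneg.2 (hg (Nat.cast_le.2 h)))
        (sub_nonneg.2 (hc i j h (by omega)))
    · exact mul_nonneg_of_nonpos_of_nonpos (sub_nonpos.2 (hg (Nat.cast_le.2 h)))
        (sub_nonpos.2 (by linarith [hc j i h (by omega)]))
  have h1 : ∑ i ∈ Finset.range (n + 1), ∑ j ∈ Finset.range (n + 1),
      (g j - g i) * (a i * b j - a j * b i) =
      ∑ i ∈ Finset.range (n + 1), (a i * (∑ j ∈ Finset.range (n + 1), g j * b j)
        - b i * (∑ j ∈ Finset.range (n + 1), g j * a j)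
        - (g i * a i) * (∑ j ∈ Finset.range (n + 1), b j)
        + (g i * b i) * (∑ j ∈ Finset.range (n + 1), a j)) := by
    refine Finset.sum_congr rfl fun i _ => ?_
    simp only [Finset.mul_sum, ← Finset.sum_sub_distrib, ← Finset.sum_add_distrib]
    exact Finset.sum_congr rfl fun j _ => by ring
  rw [h1, Finset.sum_add_distrib, Finset.sum_sub_distrib, Finset.sum_sub_distrib,
    ← Finset.sum_mul, ← Finset.sum_mul, ← Finset.sum_mul, ← Finset.sum_mul, ha, hb] at h0
  linarith

lemma sum_binP (n : ℕ) (p : ℝ) : ∑ k ∈ Finset.range (n + 1), binP n p k = 1 := by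
  have h := add_pow p (1 - p) n
  rw [add_sub_cancel, one_pow] at h
  rw [h]
  exact Finset.sum_congr rfl fun k _ => by unfold binP; ring

/-- Vandermonde's identity. -/
lemma sum_hgP (N n : ℕ) (hN : 2 * n ≤ N) :
    ∑ k ∈ Finset.range (n + 1), hgP N n k = 1 := by
  have h := Nat.add_choose_eq n (N - n) n
  rw [Finset.Nat.sum_antidiagonal_eq_sum_range_succ_mk,
    show n + (N - n) = N by omega] at h
  have hpos : (0 : ℝ) < N.choose n := by exact_mod_cast Nat.choose_pos (by omega)
  unfold hgP
  rw [← Finset.sum_div, div_eq_one_iff_eq hpos.ne', h]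
  push_cast
  rfl

lemma choose_step (M n m : ℕ) (hm : m + 1 ≤ n) (hM : n ≤ M) :
    (1 - (n : ℝ) / M) * M.choose m ≤ (n : ℝ) / M * M.choose (m + 1) := by
  have hM0 : (0 : ℝ) < M := by exact_mod_cast (by omega : 0 < M)
  have h : (M.choose (m + 1) : ℝ) * (m + 1) = M.choose m * (M - m) := by
    have := Nat.choose_succ_right_eq M m
    rw [← Nat.cast_sub (show m ≤ M by omega)]
    exact_mod_cast this
  have hm' : (m : ℝ) + 1 ≤ n := by exact_mod_cast hm
  have hM' : (n : ℝ) ≤ M := by exact_mod_cast hM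
  have hm0 : (0 : ℝ) < (m : ℝ) + 1 := by positivity
  have hc : (0 : ℝ) ≤ M.choose m := by positivity
  have key : ((M : ℝ) - n) * (m + 1) ≤ n * (M - m) := by
    nlinarith [mul_nonneg (sub_nonneg.2 hM') (sub_nonneg.2 hm')]
  have h2 : ((M : ℝ) - n) * M.choose m ≤ n * M.choose (m + 1) := by
    refine le_of_mul_le_mul_right ?_ hm0
    calc ((M : ℝ) - n) * M.choose m * (m + 1)
        = ((M : ℝ) - n) * (m + 1) * M.choose m := by ring
      _ ≤ n * (M - m) * M.choose m := mul_le_mul_of_nonneg_right key hc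
      _ = n * (M.choose (m + 1) * (m + 1)) := by rw [h]; ring
      _ = _ := by ring
  rw [one_sub_div hM0.ne', div_mul_eq_mul_div, div_mul_eq_mul_div]
  exact div_le_div_of_nonneg_right h2 hM0.le

/-- The likelihood ratio of `Bin(n, n / M)` to the hypergeometric law, up to a constant
factor, is nondecreasing on `{0, …, n}`. -/
lemma ratio_mono (M n : ℕ) (hM : n ≤ M) (i j : ℕ) (hij : i ≤ j) (hj : j ≤ n) :
    ((n : ℝ) / M) ^ i * (1 - (n : ℝ) / M) ^ (n - i) / M.choose (n - i) ≤
      ((n : ℝ) / M) ^ j * (1 - (n : ℝ) / M) ^ (n - j) / M.choose (n - j) := by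
  induction j, hij using Nat.le_induction with
  | base => exact le_rfl
  | succ k hk ih =>
    refine (ih (by omega)).trans ?_
    obtain ⟨m, rfl⟩ : ∃ m, n = k + 1 + m := ⟨n - (k + 1), by omega⟩
    rw [show k + 1 + m - k = m + 1 by omega, show k + 1 + m - (k + 1) = m by omega]
    have hs := choose_step M (k + 1 + m) m (by omega) hM
    have hp0 : 0 ≤ ((k + 1 + m : ℕ) : ℝ) / M := by positivity
    have hp1 : ((k + 1 + m : ℕ) : ℝ) / M ≤ 1 :=
      div_le_one_of_le₀ (by exact_mod_cast hM) (by positivity)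
    generalize ((k + 1 + m : ℕ) : ℝ) / M = p at *
    have c1 : (0 : ℝ) < M.choose (m + 1) := by exact_mod_cast Nat.choose_pos (by omega)
    have c2 : (0 : ℝ) < M.choose m := by exact_mod_cast Nat.choose_pos (by omega)
    rw [div_le_div_iff₀ c1 c2]
    have hq : 0 ≤ p ^ k * (1 - p) ^ m :=
      mul_nonneg (pow_nonneg hp0 _) (pow_nonneg (by linarith) _)
    calc p ^ k * (1 - p) ^ (m + 1) * M.choose m
        = p ^ k * (1 - p) ^ m * ((1 - p) * M.choose m) := by ring
      _ ≤ p ^ k * (1 - p) ^ m * (p * M.choose (m + 1)) := mul_le_mul_of_nonneg_left hs hq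
      _ = _ := by ring

lemma hgP_binP_cross (N n : ℕ) (hN : 2 * n ≤ N) (i j : ℕ) (hij : i ≤ j) (hj : j ≤ n) :
    hgP N n j * binP n ((n : ℝ) / ((N - n : ℕ) : ℝ)) i ≤
      hgP N n i * binP n ((n : ℝ) / ((N - n : ℕ) : ℝ)) j := by
  have h := ratio_mono (N - n) n (by omega) i j hij hj
  unfold hgP binP
  generalize (n : ℝ) / ((N - n : ℕ) : ℝ) = p at *
  have ci : (0 : ℝ) < (N - n).choose (n - i) := by exact_mod_cast Nat.choose_pos (by omega)
  have cj : (0 : ℝ) < (N - n).choose (n - j) := by exact_mod_cast Nat.choose_pos (by omega)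
  rw [div_le_div_iff₀ ci cj] at h
  have hc : (0 : ℝ) ≤ n.choose i * n.choose j / N.choose n := by positivity
  have h2 := mul_le_mul_of_nonneg_left h hc
  calc _ = (n.choose i * n.choose j / N.choose n : ℝ) *
        (p ^ i * (1 - p) ^ (n - i) * (N - n).choose (n - j)) := by ring
    _ ≤ _ := h2
    _ = _ := by ring

/-- Lemma 2 (binomial stochastically dominates hypergeometric): with
`p̃ = n/(N−n)`, for every `x ∈ ℝ`, `P_{HG}(X ≥ x) ≤ P_{Bin}(X ≥ x)`; consequently
`E_{HG}[g(X)] ≤ E_{Bin}[g(X)]` for every nondecreasing `g : ℝ → ℝ`. -/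
theorem stmt17 (N n : ℕ) (hn : 0 < n) (hN : 2 * n ≤ N) :
    (∀ x : ℝ,
      ∑ k ∈ Finset.range (n + 1), (if x ≤ (k : ℝ) then hgP N n k else 0) ≤
        ∑ k ∈ Finset.range (n + 1),
          (if x ≤ (k : ℝ) then binP n ((n : ℝ) / ((N - n : ℕ) : ℝ)) k else 0)) ∧
    ∀ g : ℝ → ℝ, Monotone g →
      ∑ k ∈ Finset.range (n + 1), g k * hgP N n k ≤
        ∑ k ∈ Finset.range (n + 1), g k * binP n ((n : ℝ) / ((N - n : ℕ) : ℝ)) k := by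
  have main : ∀ g : ℝ → ℝ, Monotone g →
      ∑ k ∈ Finset.range (n + 1), g k * hgP N n k ≤
        ∑ k ∈ Finset.range (n + 1), g k * binP n ((n : ℝ) / ((N - n : ℕ) : ℝ)) k :=
    fun g hg => sum_le_of_cross n _ _ g hg (sum_hgP N n hN) (sum_binP n _)
      (hgP_binP_cross N n hN)
  refine ⟨fun x => ?_, main⟩
  have hmono : Monotone (fun y : ℝ => if x ≤ y then (1 : ℝ) else 0) := by
    intro y z hyz
    dsimp only
    split_ifs with h1 h2
    · exact le_rfl
    · exact absurd (h1.trans hyz) h2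
    · exact zero_le_one
    · exact le_rfl
  simpa only [ite_mul, one_mul, zero_mul] using main _ hmono
end
end

section
/- (Logarithmic bound for binomial point probabilities.) Let (n_t) be integers with n_t → ∞, (p_t) ⊂ (0,1) with p_t → 0, (r_t) with r_t ≥ 1 and log(r_t)/log(1/p_t) → 0, and (k_t) integers with 1 ≤ k_t ≤ n_t and k_t ≥ n_t/r_t. Then log P_{n_t,p_t}(k_t) ≤ k_t log(p_t)·(1+o(1)); equivalently, there exists a sequence ε_t → 0 such that log P_{n_t,p_t}(k_t) ≤ k_t log(p_t) + ε_t · k_t log(1/p_t) for all t. -/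
/-!
Since `k ^ k / k! ≤ exp k`, one has `C(n,k) ≤ n ^ k / k! ≤ (e n / k) ^ k ≤ (e r) ^ k` as soon as
`n ≤ r k` (`choose_le_exp_mul_pow`). Bounding `(1 - p) ^ (n - k)` by `1` gives
`log P_{n,p}(k) ≤ k log p + k (1 + log r)`, so `ε = (1 + log r) / log (1 / p)` works: it tends to
`0` because `log (1 / p) → ∞` and `log r = o(log (1 / p))`.
-/

open Filter

noncomputable section

theorem choose_le_exp_mul_pow (n k : ℕ) (r : ℝ) (h : (n : ℝ) ≤ r * k) (hr : 0 ≤ r) :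
    (n.choose k : ℝ) ≤ (r * Real.exp 1) ^ k := by
  calc (n.choose k : ℝ) ≤ (n : ℝ) ^ k / (k.factorial : ℝ) := Nat.choose_le_pow_div k n
    _ ≤ (r * k) ^ k / (k.factorial : ℝ) := by gcongr
    _ = r ^ k * ((k : ℝ) ^ k / (k.factorial : ℝ)) := by rw [mul_pow]; ring
    _ ≤ r ^ k * Real.exp k := by
        gcongr
        exact Real.pow_div_factorial_le_exp k (Nat.cast_nonneg k) k
    _ = (r * Real.exp 1) ^ k := by rw [mul_pow, ← Real.exp_nat_mul, mul_one]

/-- Lemma 3 (logarithmic bound for binomial point probabilities): if `n_t → ∞`,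
`p_t → 0`, `r_t ≥ 1` with `log r_t = o(log(1/p_t))`, and `n_t/r_t ≤ k_t ≤ n_t`,
then `log P_{n_t,p_t}(k_t) ≤ k_t log p_t (1 + o(1))`. -/
theorem stmt18 (n k : ℕ → ℕ) (p r : ℕ → ℝ)
    (hn : Tendsto n atTop atTop)
    (hp : ∀ t, p t ∈ Set.Ioo (0 : ℝ) 1)
    (hp0 : Tendsto p atTop (nhds 0))
    (hr : ∀ t, 1 ≤ r t)
    (hrlog : Tendsto (fun t => Real.log (r t) / Real.log (1 / p t)) atTop (nhds 0))
    (hk1 : ∀ t, 1 ≤ k t) (hkn : ∀ t, k t ≤ n t)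
    (hkr : ∀ t, (n t : ℝ) / r t ≤ k t) :
    ∃ ε : ℕ → ℝ, Tendsto ε atTop (nhds 0) ∧ ∀ t,
      Real.log (binP (n t) (p t) (k t)) ≤
        (k t : ℝ) * Real.log (p t) + ε t * ((k t : ℝ) * Real.log (1 / p t)) := by
  have hlog : Tendsto (fun t => Real.log (1 / p t)) atTop atTop := by
    have h : Tendsto p atTop (nhdsWithin 0 (Set.Ioi 0)) :=
      tendsto_nhdsWithin_iff.2 ⟨hp0, Eventually.of_forall fun t => (hp t).1⟩
    simpa only [one_div, Function.comp_def] using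
      Real.tendsto_log_atTop.comp (tendsto_inv_nhdsGT_zero.comp h)
  refine ⟨fun t => (1 + Real.log (r t)) / Real.log (1 / p t), ?_, fun t => ?_⟩
  · simpa only [add_div, add_zero] using (hlog.const_div_atTop 1).add hrlog
  · obtain ⟨h0, h1⟩ := hp t
    have hr0 : 0 < r t := lt_of_lt_of_le one_pos (hr t)
    have hL : 0 < Real.log (1 / p t) := Real.log_pos ((one_lt_div h0).2 h1)
    have hC : (0 : ℝ) < ((n t).choose (k t) : ℝ) := by
      exact_mod_cast Nat.choose_pos (hkn t)
    have hq : 0 < 1 - p t := by linarith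
    have hchoose := choose_le_exp_mul_pow (n t) (k t) (r t)
      (by rw [mul_comm]; exact (div_le_iff₀ hr0).1 (hkr t)) hr0.le
    have hbound : binP (n t) (p t) (k t) ≤ (r t * Real.exp 1) ^ k t * p t ^ k t := by
      unfold binP
      calc _ ≤ ((n t).choose (k t) : ℝ) * p t ^ k t * 1 := by
            gcongr
            exact pow_le_one₀ hq.le (by linarith)
        _ ≤ _ := by rw [mul_one]; gcongr
    have hpos : 0 < binP (n t) (p t) (k t) := by unfold binP; positivity
    calc Real.log (binP (n t) (p t) (k t))
        ≤ Real.log ((r t * Real.exp 1) ^ k t * p t ^ k t) := Real.log_le_log hpos hbound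
      _ = (k t : ℝ) * Real.log (p t) + (k t : ℝ) * (1 + Real.log (r t)) := by
          rw [Real.log_mul (by positivity) (by positivity), Real.log_pow, Real.log_pow,
            Real.log_mul hr0.ne' (Real.exp_pos 1).ne', Real.log_exp]
          ring
      _ = _ := by
          field_simp
end
end
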